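/- arXiv:1501.03682 — 10 statements merged into one kernel-verified Lean document; each statement's English description precedes it below -/
import Mathlib

section
/- For every integer n ≥ 2, every real μ > 1, and every integer m ≥ 1, the symbol factorizes as A^{(n,m)}(z) = 2^{-(n+1+m^{-μ})} (1+z)^{n-1} (z² + 2(2^{1+m^{-μ}} − 1) z + 1) for all z ∈ ℂ; moreover, for n ≥ 3 one has A^{(n,m)}(z) = ((1+z)/2) · A^{(n-1,m)}(z) for all z ∈ ℂ. -/
open MeasureTheory Filter Complex

/-- Binomial coefficient `binom p q` extended to integer `q`, zero outside `0 ≤ q ≤ p`. -/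
noncomputable def binomZ (p : ℕ) (q : ℤ) : ℝ :=
  if 0 ≤ q then (p.choose q.toNat : ℝ) else 0

/-- The nonstationary mask `a^{(n,m)}_α` with tension parameter `μ`. -/
noncomputable def maskNS (n m : ℕ) (μ : ℝ) (α : ℤ) : ℝ :=
  if m = 0 then (if α = 0 ∨ α = 1 then 1/2 else 0)
  else if 0 ≤ α ∧ α ≤ (n : ℤ) + 1 then
    (2 : ℝ) ^ (-((n : ℝ) + 1 + (m : ℝ) ^ (-μ))) *
      (binomZ (n+1) α + 4 * ((2 : ℝ) ^ ((m : ℝ) ^ (-μ)) - 1) * binomZ (n-1) (α-1))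
  else 0

/-- The symbol `A^{(n,m)}(z) = Σ_{α=0}^{n+1} a^{(n,m)}_α z^α`. -/
noncomputable def symbolNS (n m : ℕ) (μ : ℝ) (z : ℂ) : ℂ :=
  ∑ α ∈ Finset.range (n+2), (maskNS n m μ (α : ℤ) : ℂ) * z ^ α

theorem symbolNS_aux (k m : ℕ) (μ : ℝ) (hm : 1 ≤ m) (z : ℂ) :
    symbolNS (k + 1) m μ z =
      (((2 : ℝ) ^ (-(((k + 1 : ℕ) : ℝ) + 1 + (m : ℝ) ^ (-μ))) : ℝ) : ℂ) * (1 + z) ^ k *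
        (z ^ 2 + 2 * ((((2 : ℝ) ^ (1 + (m : ℝ) ^ (-μ)) : ℝ) - 1 : ℝ) : ℂ) * z + 1) := by
  have h2 : (2 : ℝ) ^ (1 + (m : ℝ) ^ (-μ)) = 2 * (2 : ℝ) ^ ((m : ℝ) ^ (-μ)) := by
    rw [Real.rpow_add (by norm_num), Real.rpow_one]
  rw [h2]
  unfold symbolNS maskNS
  generalize (2 : ℝ) ^ (-(((k + 1 : ℕ) : ℝ) + 1 + (m : ℝ) ^ (-μ))) = c
  generalize (2 : ℝ) ^ ((m : ℝ) ^ (-μ)) = t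
  have e1 : ∑ α ∈ Finset.range (k + 3), ((binomZ (k + 2) (α : ℤ) : ℝ) : ℂ) * z ^ α
      = (1 + z) ^ (k + 2) := by
    rw [add_comm 1 z, add_pow]
    refine Finset.sum_congr rfl fun α _ => ?_
    simp [binomZ, mul_comm]
  have e2 : ∑ α ∈ Finset.range (k + 3), ((binomZ k ((α : ℤ) - 1) : ℝ) : ℂ) * z ^ α
      = z * (1 + z) ^ k := by
    rw [Finset.sum_range_succ', Finset.sum_range_succ, add_comm 1 z, add_pow, Finset.mul_sum]
    have h0 : binomZ k (((0 : ℕ) : ℤ) - 1) = 0 := by simp [binomZ]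
    have hs : ∀ j : ℕ, binomZ k (((j + 1 : ℕ) : ℤ) - 1) = k.choose j := by
      intro j
      simp [binomZ]
    rw [h0, hs, Nat.choose_succ_self]
    simp only [Nat.cast_zero, Complex.ofReal_zero, zero_mul, add_zero]
    refine Finset.sum_congr rfl fun α _ => ?_
    rw [hs]
    simp only [one_pow, Complex.ofReal_natCast]
    ring
  have e3 : ∀ α ∈ Finset.range (k + 1 + 2),
      ((if m = 0 then (if (α : ℤ) = 0 ∨ (α : ℤ) = 1 then 1/2 else 0)
        else if 0 ≤ (α : ℤ) ∧ (α : ℤ) ≤ ((k + 1 : ℕ) : ℤ) + 1 then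
          c * (binomZ (k + 1 + 1) α + 4 * (t - 1) * binomZ (k + 1 - 1) ((α : ℤ) - 1))
        else 0 : ℝ) : ℂ) * z ^ α
      = c * (((binomZ (k + 2) (α : ℤ) : ℝ) : ℂ) * z ^ α)
        + c * 4 * (t - 1) * (((binomZ k ((α : ℤ) - 1) : ℝ) : ℂ) * z ^ α) := by
    intro α hα
    rw [Finset.mem_range] at hα
    rw [if_neg (by omega), if_pos (by omega), Nat.add_sub_cancel]
    push_cast
    ring
  rw [Finset.sum_congr rfl e3, Finset.sum_add_distrib, ← Finset.mul_sum, ← Finset.mul_sum,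
    show k + 1 + 2 = k + 3 from rfl, e1, e2]
  push_cast
  ring

/-- Factorization of the symbol `A^{(n,m)}`:
`A^{(n,m)}(z) = 2^{-(n+1+m^{-μ})} (1+z)^{n-1} (z² + 2(2^{1+m^{-μ}} − 1) z + 1)`,
and for `n ≥ 3` also `A^{(n,m)}(z) = ((1+z)/2) · A^{(n-1,m)}(z)`. -/
theorem symbolNS_factorization (n : ℕ) (hn : 2 ≤ n) (μ : ℝ) (hμ : 1 < μ)
    (m : ℕ) (hm : 1 ≤ m) (z : ℂ) :
    symbolNS n m μ z =
      (((2 : ℝ) ^ (-((n : ℝ) + 1 + (m : ℝ) ^ (-μ))) : ℝ) : ℂ) * (1 + z) ^ (n - 1) *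
        (z ^ 2 + 2 * ((((2 : ℝ) ^ (1 + (m : ℝ) ^ (-μ)) : ℝ) - 1 : ℝ) : ℂ) * z + 1) ∧
      (3 ≤ n → symbolNS n m μ z = ((1 + z) / 2) * symbolNS (n - 1) m μ z) := by
  obtain ⟨k, rfl⟩ : ∃ k, n = k + 1 := ⟨n - 1, by omega⟩
  refine ⟨symbolNS_aux k m μ hm z, fun h3 => ?_⟩
  obtain ⟨j, rfl⟩ : ∃ j, k = j + 1 := ⟨k - 1, by omega⟩
  rw [Nat.add_sub_cancel, symbolNS_aux (j + 1) m μ hm z, symbolNS_aux j m μ hm z]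
  have hc : (2 : ℝ) ^ (-(((j + 1 + 1 : ℕ) : ℝ) + 1 + (m : ℝ) ^ (-μ)))
      = (2 : ℝ) ^ (-(((j + 1 : ℕ) : ℝ) + 1 + (m : ℝ) ^ (-μ))) / 2 := by
    rw [← Real.rpow_sub_one (by norm_num)]
    congr 1
    push_cast
    ring
  rw [hc]
  push_cast
  ring
end

section
/- For every integer n ≥ 2, every real μ > 1, and every integer m ≥ 1, the symbol A^{(n,m)} is a Hurwitz polynomial: every z ∈ ℂ with A^{(n,m)}(z) = 0 satisfies Re z < 0. -/
open MeasureTheory Filter Complex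

theorem symbolNS_factor (k m : ℕ) (hm : 1 ≤ m) (μ : ℝ) (z : ℂ) :
    symbolNS (k+1) m μ z =
      (((2 : ℝ) ^ (-(((k+1 : ℕ) : ℝ) + 1 + (m : ℝ) ^ (-μ))) : ℝ) : ℂ) * ((z + 1) ^ k *
        ((z + 1) ^ 2 + 4 * (((2 : ℝ) ^ ((m : ℝ) ^ (-μ)) - 1 : ℝ) : ℂ) * z)) := by
  have hm0 : m ≠ 0 := by omega
  unfold symbolNS
  generalize hc : (2 : ℝ) ^ (-(((k+1 : ℕ) : ℝ) + 1 + (m : ℝ) ^ (-μ))) = c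
  generalize ht : (2 : ℝ) ^ ((m : ℝ) ^ (-μ)) - 1 = t
  have h1 : ∑ α ∈ Finset.range (k+1+2), (maskNS (k+1) m μ (α : ℤ) : ℂ) * z ^ α
      = ∑ α ∈ Finset.range (k+2+1), ((c : ℂ) * (z ^ α * ((k+2).choose α : ℂ))
          + (c : ℂ) * (4 * t) * ((binomZ k ((α : ℤ) - 1) : ℂ) * z ^ α)) := by
    apply Finset.sum_congr rfl
    intro α hα
    have hα' : α < k + 3 := by simpa using hα
    have h2 : (0 : ℤ) ≤ (α : ℤ) ∧ (α : ℤ) ≤ ((k+1 : ℕ) : ℤ) + 1 := by omega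
    have h3 : binomZ (k+1+1) (α : ℤ) = ((k+2).choose α : ℝ) := by simp [binomZ]
    rw [maskNS, if_neg hm0, if_pos h2, hc, ht, h3, Nat.add_sub_cancel]
    push_cast
    ring
  have h4 : ∑ α ∈ Finset.range (k+2+1), (binomZ k ((α : ℤ) - 1) : ℂ) * z ^ α
      = z * (z + 1) ^ k := by
    have e : ∀ α : ℕ, binomZ k (((α + 1 : ℕ) : ℤ) - 1) = (k.choose α : ℝ) := by
      intro α; simp [binomZ]
    have e0 : binomZ k (((0 : ℕ) : ℤ) - 1) = 0 := by simp [binomZ]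
    rw [Finset.sum_range_succ', e0, Finset.sum_range_succ, e, Nat.choose_succ_self, add_pow,
      Finset.mul_sum]
    simp only [e]
    simp only [ofReal_natCast, Nat.cast_zero, ofReal_zero, zero_mul, add_zero, one_pow, mul_one]
    apply Finset.sum_congr rfl
    intro α _
    ring
  have h5 : ∑ α ∈ Finset.range (k+2+1), (z ^ α * ((k+2).choose α : ℂ)) = (z + 1) ^ (k+2) := by
    rw [add_pow]; simp
  rw [h1, Finset.sum_add_distrib, ← Finset.mul_sum, ← Finset.mul_sum, h4, h5]
  ring

/-- The symbol `A^{(n,m)}` is a Hurwitz polynomial: all its zeros have negative real part. -/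
theorem symbolNS_hurwitz (n : ℕ) (hn : 2 ≤ n) (μ : ℝ) (hμ : 1 < μ)
    (m : ℕ) (hm : 1 ≤ m) :
    ∀ z : ℂ, symbolNS n m μ z = 0 → z.re < 0 := by
  obtain ⟨k, rfl⟩ : ∃ k, n = k + 1 := ⟨n - 1, by omega⟩
  intro z hz
  rw [symbolNS_factor k m hm] at hz
  have hc : (0 : ℝ) < (2 : ℝ) ^ (-(((k+1 : ℕ) : ℝ) + 1 + (m : ℝ) ^ (-μ))) := by positivity
  have ht : (0 : ℝ) ≤ (2 : ℝ) ^ ((m : ℝ) ^ (-μ)) - 1 := by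
    have := Real.one_le_rpow (x := 2) (z := (m : ℝ) ^ (-μ)) (by norm_num) (by positivity)
    linarith
  generalize (2 : ℝ) ^ (-(((k+1 : ℕ) : ℝ) + 1 + (m : ℝ) ^ (-μ))) = c at hz hc
  generalize (2 : ℝ) ^ ((m : ℝ) ^ (-μ)) - 1 = t at hz ht
  rcases mul_eq_zero.1 hz with h | h
  · exact absurd (ofReal_eq_zero.1 h) hc.ne'
  rcases mul_eq_zero.1 h with h | h
  · have h := eq_neg_of_add_eq_zero_left (eq_zero_of_pow_eq_zero h)
    rw [h]; simp
  · by_contra! hx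
    have hre := congrArg Complex.re h
    have him := congrArg Complex.im h
    simp [pow_two] at hre him
    have hy : z.im * (2 * z.re + 2 + 4 * t) = 0 := by linarith
    rcases mul_eq_zero.1 hy with hy | hy
    · rw [hy] at hre
      nlinarith [mul_nonneg ht hx, mul_nonneg hx hx]
    · linarith
end

section
/- For every integer n ≥ 2, every real μ > 1, and every integer m ≥ 1, the mask a^{(n,m)} is bell-shaped: a^{(n,m)}_α > 0 for all 0 ≤ α ≤ n+1; a^{(n,m)}_α = a^{(n,m)}_{n+1−α} for all α ∈ ℤ (central symmetry); and a^{(n,m)}_α < a^{(n,m)}_{α+1} for all integers α with 0 ≤ α ≤ ⌊(n+1)/2⌋ − 1 (strict increase up to the middle index). -/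
open MeasureTheory Filter Complex

theorem binomZ_symm_aux (p : ℕ) (q r : ℤ) (h : q + r = p) : binomZ p q = binomZ p r := by
  unfold binomZ
  by_cases hq : 0 ≤ q
  · by_cases hr : 0 ≤ r
    · rw [if_pos hq, if_pos hr]
      congr 1
      exact Nat.choose_symm_of_eq_add (by omega)
    · rw [if_pos hq, if_neg hr, Nat.choose_eq_zero_of_lt (by omega)]
      simp
  · rw [if_neg hq, if_pos (by omega), Nat.choose_eq_zero_of_lt (by omega)]
    simp

theorem binomZ_nonneg_aux (p : ℕ) (q : ℤ) : 0 ≤ binomZ p q := by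
  unfold binomZ
  split_ifs <;> positivity

theorem choose_lt_aux (p k : ℕ) (h : 2 * k + 2 ≤ p) : p.choose k < p.choose (k + 1) := by
  have h1 := Nat.choose_succ_right_eq p k
  have h2 : 0 < p.choose k := Nat.choose_pos (by omega)
  have h3 : k + 1 < p - k ∨ k + 1 = p - k := by omega
  have h4 : k + 1 < p - k := by omega
  by_contra hc
  push Not at hc
  have h5 : p.choose (k+1) * (k+1) ≤ p.choose k * (k+1) := Nat.mul_le_mul_right _ hc
  have h6 : p.choose k * (k+1) < p.choose k * (p-k) := Nat.mul_lt_mul_of_pos_left h4 h2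
  omega

/-- The mask `a^{(n,m)}` (for `m ≥ 1`) is bell-shaped: positive on `[0, n+1]`,
centrally symmetric, and strictly increasing up to the middle index. -/
theorem maskNS_bell_shaped (n : ℕ) (hn : 2 ≤ n) (μ : ℝ) (hμ : 1 < μ)
    (m : ℕ) (hm : 1 ≤ m) :
    (∀ α : ℤ, 0 ≤ α → α ≤ (n : ℤ) + 1 → 0 < maskNS n m μ α) ∧
    (∀ α : ℤ, maskNS n m μ α = maskNS n m μ ((n : ℤ) + 1 - α)) ∧
    (∀ α : ℤ, 0 ≤ α → α ≤ (((n + 1) / 2 : ℕ) : ℤ) - 1 →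
      maskNS n m μ α < maskNS n m μ (α + 1)) := by
  have hd : 0 ≤ 4 * ((2 : ℝ) ^ ((m : ℝ) ^ (-μ)) - 1) := by
    have : (1 : ℝ) ≤ (2 : ℝ) ^ ((m : ℝ) ^ (-μ)) :=
      Real.one_le_rpow (by norm_num) (by positivity)
    linarith
  have hC : 0 < (2 : ℝ) ^ (-((n : ℝ) + 1 + (m : ℝ) ^ (-μ))) := by positivity
  have hm0 : m ≠ 0 := by omega
  unfold maskNS
  simp only [if_neg hm0]
  refine ⟨?_, ?_, ?_⟩
  · intro α h0 h1
    rw [if_pos ⟨h0, h1⟩]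
    have h2 : 0 < binomZ (n+1) α := by
      unfold binomZ
      rw [if_pos h0]
      exact_mod_cast Nat.choose_pos (by omega)
    have h3 := mul_nonneg hd (binomZ_nonneg_aux (n-1) (α-1))
    exact mul_pos hC (by linarith)
  · intro α
    by_cases h : 0 ≤ α ∧ α ≤ (n : ℤ) + 1
    · rw [if_pos h, if_pos (by omega),
        binomZ_symm_aux (n+1) α ((n : ℤ) + 1 - α) (by push_cast; ring),
        binomZ_symm_aux (n-1) (α-1) ((n : ℤ) + 1 - α - 1) (by omega)]
    · rw [if_neg h, if_neg (by omega)]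
  · intro α h0 h1
    rw [if_pos (by omega), if_pos (by omega)]
    obtain ⟨k, rfl⟩ := Int.eq_ofNat_of_zero_le h0
    apply mul_lt_mul_of_pos_left _ hC
    apply add_lt_add_of_lt_of_le
    · unfold binomZ
      rw [if_pos (by omega), if_pos (by omega)]
      have := choose_lt_aux (n+1) k (by omega)
      exact_mod_cast this
    · apply mul_le_mul_of_nonneg_left _ hd
      rcases k with _ | j
      · have : binomZ (n-1) (((0:ℕ):ℤ) - 1) = 0 := by simp [binomZ]
        rw [this]
        exact binomZ_nonneg_aux _ _
      · unfold binomZ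
        rw [if_pos (by omega), if_pos (by omega)]
        have e1 : (((j+1 : ℕ) : ℤ) - 1).toNat = j := by omega
        have e2 : (((j+1 : ℕ) : ℤ) + 1 - 1).toNat = j + 1 := by omega
        rw [e1, e2]
        exact_mod_cast Nat.choose_le_succ_of_lt_half_left (by omega)
end

section
/- For every integer n ≥ 2 and every real μ > 1, the B-spline mask a^{(n)} is the fundamental mask of the nonstationary mask sequence: for every α ∈ ℤ, the series Σ_{m=1}^{∞} |a^{(n,m)}_α − a^{(n)}_α| converges (is finite). -/
open MeasureTheory Filter Complex

/-- The B-spline mask of degree `n`: `a^{(n)}_α = 2^{-(n+1)} binom(n+1, α)`. -/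
noncomputable def bsplineMask (n : ℕ) (α : ℤ) : ℝ :=
  (1 / (2 : ℝ) ^ (n + 1)) * binomZ (n + 1) α

/-- The B-spline mask is the fundamental mask of the nonstationary mask sequence:
`Σ_{m≥1} |a^{(n,m)}_α − a^{(n)}_α| < ∞` for every `α`. -/
theorem maskNS_fundamental_mask (n : ℕ) (hn : 2 ≤ n) (μ : ℝ) (hμ : 1 < μ) :
    ∀ α : ℤ, Summable (fun m : ℕ => |maskNS n (m + 1) μ α - bsplineMask n α|) := by
  intro α
  have hs : Summable (fun m : ℕ => (((m + 1 : ℕ) : ℝ)) ^ (-μ)) :=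
    (summable_nat_add_iff 1).2 (Real.summable_nat_rpow.2 (by linarith))
  by_cases h : 0 ≤ α ∧ α ≤ (n : ℤ) + 1
  · refine Summable.of_nonneg_of_le (fun _ => abs_nonneg _) (fun m => ?_)
      (hs.mul_left |(1 / (2 : ℝ) ^ (n + 1)) * (4 * binomZ (n-1) (α-1) - binomZ (n+1) α)|)
    have hx : 0 ≤ (((m + 1 : ℕ) : ℝ)) ^ (-μ) := by positivity
    simp only [maskNS, bsplineMask, if_pos h, Nat.succ_ne_zero, if_false]
    generalize (((m + 1 : ℕ) : ℝ)) ^ (-μ) = x at hx ⊢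
    have h1 : (2 : ℝ) ^ (-((n : ℝ) + 1 + x)) = (1 / (2 : ℝ) ^ (n + 1)) * (2 : ℝ) ^ (-x) := by
      rw [neg_add, Real.rpow_add two_pos, Real.rpow_neg two_pos.le ((n : ℝ) + 1), one_div,
        ← Real.rpow_natCast]
      push_cast
      rfl
    have h2 : (2 : ℝ) ^ (-x) * (2 : ℝ) ^ x = 1 := by
      rw [← Real.rpow_add two_pos]; simp
    have h3 : (2 : ℝ) ^ (-x) ≤ 1 :=
      Real.rpow_le_one_of_one_le_of_nonpos one_le_two (by linarith)
    have h4 : 1 - (2 : ℝ) ^ (-x) ≤ x := by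
      rw [Real.rpow_def_of_pos two_pos]
      have := Real.add_one_le_exp (Real.log 2 * -x)
      have := Real.log_two_lt_d9
      nlinarith
    rw [h1]
    have h5 : ∀ c B B' : ℝ, c * (2 : ℝ) ^ (-x) * (B + 4 * ((2 : ℝ) ^ x - 1) * B') - c * B
        = c * (4 * B' - B) * (1 - (2 : ℝ) ^ (-x)) := by
      intro c B B'
      linear_combination (4 * c * B') * h2
    rw [h5, abs_mul]
    refine mul_le_mul_of_nonneg_left ?_ (abs_nonneg _)
    rw [abs_of_nonneg (by linarith)]
    exact h4
  · have hb : binomZ (n+1) α = 0 := by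
      unfold binomZ
      split_ifs with h0
      · rw [Nat.choose_eq_zero_of_lt (by omega)]; simp
      · rfl
    simp [maskNS, bsplineMask, if_neg h, hb]
end

section
/- For every integer n ≥ 2, every real μ > 1, and every integer m ≥ 0, the infinite product Φ^{(n,m)}(ω) = ∏_{k=m}^{∞} A^{(n,k)}(e^{-iω/2^{k+1}}) converges for every ω ∈ ℝ (uniformly on compact subsets of ℝ), and the resulting function Φ^{(n,m)} : ℝ → ℂ is continuous with Φ^{(n,m)}(0) = 1. -/
open MeasureTheory Filter Complex

/-- Partial product `∏_{k=m}^{N-1} A^{(n,k)}(e^{-iω/2^{k+1}})` of the infinite product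
defining the Fourier transform `Φ^{(n,m)}` of the refinable ripplet `φ^{(n,m)}`. -/
noncomputable def partialProdNS (n m : ℕ) (μ : ℝ) (ω : ℝ) (N : ℕ) : ℂ :=
  ∏ k ∈ Finset.Ico m N, symbolNS n k μ (Complex.exp (-(Complex.I * ω) / 2 ^ (k + 1)))

lemma maskNS_nonneg (n m : ℕ) (μ : ℝ) (α : ℤ) : 0 ≤ maskNS n m μ α := by
  have hb : ∀ p q, 0 ≤ binomZ p q := by
    intro p q; unfold binomZ; split_ifs <;> positivity
  unfold maskNS
  split_ifs
  · norm_num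
  · norm_num
  · have h1 : (1:ℝ) ≤ (2 : ℝ) ^ ((m : ℝ) ^ (-μ)) :=
      Real.one_le_rpow (by norm_num) (by positivity)
    have h2 := hb (n+1) α
    have h3 := hb (n-1) (α-1)
    have h4 : 0 ≤ (2 : ℝ) ^ ((m : ℝ) ^ (-μ)) - 1 := by linarith
    positivity
  · norm_num

lemma maskNS_sum (n : ℕ) (hn : 2 ≤ n) (m : ℕ) (μ : ℝ) :
    ∑ α ∈ Finset.range (n+2), maskNS n m μ (α : ℤ) = 1 := by
  by_cases hm : m = 0
  · subst hm
    rw [Finset.sum_range_succ', Finset.sum_range_succ', Finset.sum_eq_zero]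
    · simp [maskNS]; norm_num
    · intro x _
      unfold maskNS
      rw [if_pos rfl, if_neg]
      push_cast
      omega
  · have h : ∀ α ∈ Finset.range (n+2), maskNS n m μ (α : ℤ) =
        (2 : ℝ) ^ (-((n : ℝ) + 1 + (m : ℝ) ^ (-μ))) *
      (binomZ (n+1) α + 4 * ((2 : ℝ) ^ ((m : ℝ) ^ (-μ)) - 1) * binomZ (n-1) (α-1)) := by
      intro α hα
      rw [Finset.mem_range] at hα
      unfold maskNS
      rw [if_neg hm, if_pos]
      omega
    rw [Finset.sum_congr rfl h, ← Finset.mul_sum, Finset.sum_add_distrib, ← Finset.mul_sum]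
    have h1 : ∑ α ∈ Finset.range (n+2), binomZ (n+1) (α:ℤ) = 2 ^ (n+1) := by
      have := Nat.sum_range_choose (n+1)
      simp only [binomZ, Int.natCast_nonneg, if_true, Int.toNat_natCast]
      exact_mod_cast this
    have h2 : ∑ α ∈ Finset.range (n+2), binomZ (n-1) ((α:ℤ)-1) = 2 ^ (n-1) := by
      obtain ⟨k, rfl⟩ : ∃ k, n = k + 1 := ⟨n-1, by omega⟩
      rw [Finset.sum_range_succ']
      have h3 : ∀ x : ℕ, binomZ (k+1-1) (((x+1:ℕ):ℤ)-1) = (k.choose x : ℝ) := by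
        intro x
        simp [binomZ]
      simp only [h3]
      rw [Finset.sum_range_succ]
      have := Nat.sum_range_choose k
      have h4 : binomZ (k+1-1) (((0:ℕ):ℤ)-1) = 0 := by simp [binomZ]
      rw [h4]
      simp only [Nat.choose_succ_self, Nat.add_sub_cancel]
      push_cast
      simp only [add_zero]
      exact_mod_cast this
    rw [h1, h2]
    have e : (2:ℝ)^(n+1) = 4 * 2^(n-1) := by
      obtain ⟨k, rfl⟩ : ∃ k, n = k + 1 := ⟨n-1, by omega⟩
      simp only [Nat.add_sub_cancel]
      ring
    have e2 : (2:ℝ)^(n+1) + 4 * ((2 : ℝ) ^ ((m : ℝ) ^ (-μ)) - 1) * 2^(n-1)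
        = (2:ℝ) ^ ((n : ℝ) + 1 + (m : ℝ) ^ (-μ)) := by
      rw [Real.rpow_add (by norm_num)]
      have : (2:ℝ) ^ ((n:ℝ)+1) = 2^(n+1) := by
        rw [← Real.rpow_natCast]; push_cast; rfl
      rw [this, e]; ring
    rw [e2, ← Real.rpow_add (by norm_num), neg_add_cancel, Real.rpow_zero]

lemma symbolNS_bound (n : ℕ) (hn : 2 ≤ n) (k : ℕ) (μ ω : ℝ) :
    ‖symbolNS n k μ (Complex.exp (-(Complex.I * ω) / 2 ^ (k + 1))) - 1‖
      ≤ (n+1) * |ω| * (1/2)^k := by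
  have h1 : (1:ℂ) = ∑ α ∈ Finset.range (n+2), (maskNS n k μ (α : ℤ) : ℂ) := by
    exact_mod_cast (maskNS_sum n hn k μ).symm
  have hE : ∀ α : ℕ, Complex.exp (-(Complex.I * ω) / 2 ^ (k + 1)) ^ α
      = Complex.exp (Complex.I * ((α * (-ω / 2^(k+1)) : ℝ) : ℂ)) := by
    intro α
    rw [← Complex.exp_nat_mul]
    push_cast
    congr 1
    ring
  rw [symbolNS, h1, ← Finset.sum_sub_distrib]
  calc _ ≤ ∑ α ∈ Finset.range (n+2), maskNS n k μ (α : ℤ) * ((n+1) * |ω| * (1/2)^k) := by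
        refine (norm_sum_le _ _).trans (Finset.sum_le_sum fun α hα => ?_)
        have : (maskNS n k μ (α : ℤ) : ℂ) * Complex.exp (-(Complex.I * ω) / 2 ^ (k + 1)) ^ α
            - maskNS n k μ (α : ℤ) = maskNS n k μ (α : ℤ) *
            (Complex.exp (Complex.I * ((α * (-ω / 2^(k+1)) : ℝ) : ℂ)) - 1) := by
          rw [hE]; ring
        rw [this, norm_mul, Complex.norm_real, Real.norm_of_nonneg (maskNS_nonneg _ _ _ _)]
        refine mul_le_mul_of_nonneg_left ?_ (maskNS_nonneg _ _ _ _)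
        refine (Real.norm_exp_I_mul_ofReal_sub_one_le).trans ?_
        rw [Real.norm_eq_abs, abs_mul, abs_div, abs_neg, Nat.abs_cast, abs_of_pos (by positivity : (0:ℝ) < 2^(k+1))]
        rw [Finset.mem_range] at hα
        have hα' : (α:ℝ) ≤ n + 1 := by
          exact_mod_cast (by omega : α ≤ n + 1)
        rw [mul_assoc]
        refine mul_le_mul hα' ?_ (by positivity) (by positivity)
        rw [div_eq_mul_inv]
        refine mul_le_mul_of_nonneg_left ?_ (abs_nonneg _)
        rw [one_div, inv_pow]
        exact inv_anti₀ (by positivity) (pow_le_pow_right₀ (by norm_num) (by omega))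
    _ = _ := by rw [← Finset.sum_mul, maskNS_sum n hn, one_mul]

/-- The infinite product `Φ^{(n,m)}(ω) = ∏_{k=m}^∞ A^{(n,k)}(e^{-iω/2^{k+1}})` converges for
every `ω` (uniformly on compact subsets of `ℝ`), and the limit is continuous with value `1`
at `ω = 0`. -/
theorem infinite_product_converges (n : ℕ) (hn : 2 ≤ n) (μ : ℝ) (hμ : 1 < μ) (m : ℕ) :
    ∃ Φ : ℝ → ℂ, Continuous Φ ∧ Φ 0 = 1 ∧
      (∀ ω : ℝ, Tendsto (fun N => partialProdNS n m μ ω N) atTop (nhds (Φ ω))) ∧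
      (∀ K : Set ℝ, IsCompact K →
        TendstoUniformlyOn (fun N ω => partialProdNS n m μ ω N) Φ atTop K) := by
  let g : ℕ → ℝ → ℂ := fun k ω => symbolNS n k μ (Complex.exp (-(Complex.I * ω) / 2 ^ (k + 1)))
  let f : ℕ → ℝ → ℂ := fun k ω => if m ≤ k then g k ω - 1 else 0
  have hgc : ∀ k, Continuous (g k) := by
    intro k
    simp only [g, symbolNS]
    fun_prop
  have hfc : ∀ k, Continuous (f k) := by
    intro k
    by_cases h : m ≤ k
    · simp only [f, h, if_true]; exact (hgc k).sub continuous_const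
    · simp only [f, h, if_false]; exact continuous_const
  have hpart : ∀ N ω, partialProdNS n m μ ω N = ∏ k ∈ Finset.range N, (1 + f k ω) := by
    intro N ω
    have : ∀ k, 1 + f k ω = if m ≤ k then g k ω else 1 := by
      intro k; simp only [f]; split_ifs <;> ring
    simp only [this]
    rw [← Finset.prod_filter]
    unfold partialProdNS
    refine Finset.prod_congr ?_ fun _ _ => rfl
    ext k
    simp [and_comm]
  have hunif : ∀ K : Set ℝ, IsCompact K →
        TendstoUniformlyOn (fun N ω => partialProdNS n m μ ω N)
          (fun ω => ∏' k, (1 + f k ω)) atTop K := by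
    intro K hK
    obtain ⟨R, hR⟩ := hK.isBounded.exists_norm_le
    have hu : Summable (fun k : ℕ => ((n:ℝ)+1) * R * (1/2)^k) :=
      (summable_geometric_two).mul_left _
    have := Summable.hasProdUniformlyOn_nat_one_add (f := f) hK hu
      (Eventually.of_forall fun k ω hω => ?_) (fun k => (hfc k).continuousOn)
    · have h2 := this.tendstoUniformlyOn_finsetRange
      simp only [hpart]
      exact h2
    · have hb := symbolNS_bound n hn k μ ω
      have hω' : |ω| ≤ R := hR ω hω
      have hle : ((n:ℝ)+1) * |ω| * (1/2)^k ≤ ((n:ℝ)+1) * R * (1/2)^k := by gcongr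
      have h0 : 0 ≤ ((n:ℝ)+1) * |ω| * (1/2)^k := by positivity
      simp only [f, g]
      split_ifs
      · exact hb.trans hle
      · rw [norm_zero]; exact h0.trans hle
  refine ⟨_, ?_, ?_, ?_, hunif⟩
  · refine (tendstoLocallyUniformly_iff_forall_isCompact.2 hunif).continuous
      (Eventually.of_forall fun N => ?_).frequently
    simp only [hpart]
    exact continuous_finsetProd _ fun k _ => continuous_const.add (hfc k)
  · have : ∀ k, f k 0 = 0 := by
      intro k
      have hb := symbolNS_bound n hn k μ 0
      rw [abs_zero, mul_zero, zero_mul] at hb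
      simp only [f, g]
      split_ifs
      · exact norm_le_zero_iff.1 hb
      · rfl
    simp [this]
  · intro ω
    exact (hunif {ω} isCompact_singleton).tendsto_at rfl
end

section
/- (Convolution property, Theorem 4.1, Fourier form.) For every integer n ≥ 3 and every real μ > 1: for every integer m ≥ 1 and every ω ∈ ℝ, Φ^{(n,m)}(ω) = B̂^{(0,m)}(ω) · Φ^{(n-1,m)}(ω); and for every ω ∈ ℝ, Φ^{(n,0)}(ω) = B̂^{(0,1)}(ω) · Φ^{(n-1,0)}(ω). Equivalently, the refinable ripplet φ^{(n,m)} is the convolution of the characteristic-function B-spline B^{(0,m)} (respectively B^{(0,1)} when m = 0) with φ^{(n-1,m)}. -/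
open MeasureTheory Filter Complex

/-- Fourier transform of the `2^m`-dilated cardinal B-spline of degree `d`. -/
noncomputable def BsplineFT (d m : ℕ) (ω : ℝ) : ℂ :=
  if ω = 0 then 1
  else ((1 - Complex.exp (-(Complex.I * ω) * 2 ^ (-(m : ℤ)))) /
      (Complex.I * ω * 2 ^ (-(m : ℤ)))) ^ (d + 1)

theorem sym_pos (n k : ℕ) (hk : k ≠ 0) (hn : 1 ≤ n) (μ : ℝ) (z : ℂ) :
    symbolNS n k μ z = ((2 : ℝ) ^ (-((n : ℝ) + 1 + (k : ℝ) ^ (-μ))) : ℝ) *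
      ((1 + z) ^ (n+1) + 4 * (((2 : ℝ) ^ ((k : ℝ) ^ (-μ)) - 1 : ℝ) : ℂ) * (z * (1 + z) ^ (n-1))) := by
  obtain ⟨p, rfl⟩ : ∃ p, n = p + 1 := ⟨n - 1, by omega⟩
  have h1 : (1 + z) ^ (p+1+1) = ∑ α ∈ Finset.range (p+1+2), (binomZ (p+1+1) (α : ℤ) : ℂ) * z ^ α := by
    rw [add_comm 1 z, add_pow]
    apply Finset.sum_congr rfl
    intro a _
    simp [binomZ, mul_comm]
  have h2 : z * (1 + z) ^ p = ∑ α ∈ Finset.range (p+1+2), (binomZ p ((α : ℤ) - 1) : ℂ) * z ^ α := by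
    rw [Finset.sum_range_succ', Finset.sum_range_succ, add_comm 1 z, add_pow, Finset.mul_sum]
    simp only [binomZ]
    simp [Nat.choose_succ_self]
    apply Finset.sum_congr rfl
    intro a _
    ring
  simp only [Nat.add_sub_cancel]
  rw [h1, h2, symbolNS, Finset.mul_sum, ← Finset.sum_add_distrib, Finset.mul_sum]
  apply Finset.sum_congr rfl
  intro a ha
  have ha' := Finset.mem_range.mp ha
  have hc : (0 : ℤ) ≤ (a : ℤ) ∧ (a : ℤ) ≤ ((p + 1 : ℕ) : ℤ) + 1 := by
    constructor <;> push_cast <;> omega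
  rw [maskNS, if_neg hk, if_pos hc]
  simp only [Nat.add_sub_cancel]
  push_cast
  ring

theorem sym_step (n k : ℕ) (hk : k ≠ 0) (hn : 1 ≤ n) (μ : ℝ) (z : ℂ) :
    symbolNS (n+1) k μ z = (1 + z) / 2 * symbolNS n k μ z := by
  rw [sym_pos _ _ hk (by omega), sym_pos _ _ hk hn]
  have : (2 : ℝ) ^ (-(((n+1 : ℕ) : ℝ) + 1 + (k : ℝ) ^ (-μ)))
      = (2 : ℝ) ^ (-((n : ℝ) + 1 + (k : ℝ) ^ (-μ))) / 2 := by
    rw [← Real.rpow_sub_one (by norm_num)]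
    congr 1
    push_cast
    ring
  rw [this]
  obtain ⟨p, rfl⟩ : ∃ p, n = p + 1 := ⟨n - 1, by omega⟩
  simp only [Nat.add_sub_cancel]
  rw [Complex.ofReal_div]
  push_cast
  ring

theorem sym_zero (n : ℕ) (μ : ℝ) (z : ℂ) : symbolNS n 0 μ z = (1 + z) / 2 := by
  rw [symbolNS, Finset.sum_range_succ', Finset.sum_range_succ']
  have h : ∑ k ∈ Finset.range n, (maskNS n 0 μ ((k + 1 + 1 : ℕ) : ℤ) : ℂ) * z ^ (k + 1 + 1) = 0 := by
    apply Finset.sum_eq_zero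
    intro k _
    rw [maskNS, if_pos rfl, if_neg (by omega)]
    simp
  rw [h]
  simp [maskNS]
  ring

/-- Scaled difference. -/
noncomputable def DD (ω : ℝ) (N : ℕ) : ℂ := 2 ^ N * (1 - Complex.exp (-(Complex.I * ω) / 2 ^ N))

theorem DD_step (ω : ℝ) (N : ℕ) :
    (1 + Complex.exp (-(Complex.I * ω) / 2 ^ (N+1))) / 2 * DD ω (N+1) = DD ω N := by
  have : Complex.exp (-(Complex.I * ω) / 2 ^ N) = Complex.exp (-(Complex.I * ω) / 2 ^ (N+1)) ^ 2 := by
    rw [← Complex.exp_nat_mul]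
    congr 1
    field_simp
    push_cast
    ring
  rw [DD, DD, this]
  ring

theorem DD_lim (ω : ℝ) : Tendsto (DD ω) atTop (nhds (Complex.I * ω)) := by
  have h0 : HasDerivAt (fun t : ℂ => Complex.exp (t * -(Complex.I * ω))) (-(Complex.I * ω)) 0 := by
    have := ((hasDerivAt_id (0:ℂ)).mul_const (-(Complex.I * ω))).cexp
    simpa using this
  have h1 := h0.tendsto_slope_zero
  have h2 : Tendsto (fun N : ℕ => ((1/2 : ℂ)) ^ N) atTop (nhdsWithin 0 {0}ᶜ) := by
    rw [tendsto_nhdsWithin_iff]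
    refine ⟨tendsto_pow_atTop_nhds_zero_of_norm_lt_one (by norm_num), Eventually.of_forall ?_⟩
    intro N
    simp
  have h3 := (h1.comp h2).neg
  rw [neg_neg] at h3
  refine h3.congr ?_
  intro N
  simp [DD, div_eq_mul_inv, mul_comm]
  ring

theorem pp_step (n m : ℕ) (hm : 1 ≤ m) (hn : 1 ≤ n) (μ ω : ℝ) (N : ℕ) (hN : m ≤ N) :
    partialProdNS (n+1) m μ ω N * DD ω N = DD ω m * partialProdNS n m μ ω N := by
  induction N, hN using Nat.le_induction with
  | base => simp [partialProdNS]
  | succ N hN ih =>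
    simp only [partialProdNS] at *
    rw [Finset.prod_Ico_succ_top hN, Finset.prod_Ico_succ_top hN, sym_step _ _ (by omega) hn,
      ← mul_assoc (DD ω m), ← ih, ← DD_step ω N]
    ring

theorem pp_zero (n m : ℕ) (hm : 1 ≤ m) (hn : 1 ≤ n) (μ : ℝ) (N : ℕ) :
    partialProdNS (n+1) m μ 0 N = partialProdNS n m μ 0 N := by
  apply Finset.prod_congr rfl
  intro k hk
  have := Finset.mem_Ico.mp hk
  rw [sym_step _ _ (by omega) hn]
  simp

theorem pp_head (n : ℕ) (μ ω : ℝ) (N : ℕ) (hN : 0 < N) :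
    partialProdNS n 0 μ ω N =
      (1 + Complex.exp (-(Complex.I * ω) / 2 ^ (0+1))) / 2 * partialProdNS n 1 μ ω N := by
  rw [partialProdNS, Finset.prod_eq_prod_Ico_succ_bot hN, sym_zero]
  rfl

/-- Convolution property (Theorem 4.1, Fourier form): for `n ≥ 3`,
`Φ^{(n,m)} = B̂^{(0,m)} · Φ^{(n-1,m)}` for `m ≥ 1`, and `Φ^{(n,0)} = B̂^{(0,1)} · Φ^{(n-1,0)}`. -/
theorem convolution_property (n : ℕ) (hn : 3 ≤ n) (μ : ℝ) (hμ : 1 < μ)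
    (Φ Φ' : ℕ → ℝ → ℂ)
    (hΦ : ∀ m : ℕ, ∀ ω : ℝ,
      Tendsto (fun N => partialProdNS n m μ ω N) atTop (nhds (Φ m ω)))
    (hΦ' : ∀ m : ℕ, ∀ ω : ℝ,
      Tendsto (fun N => partialProdNS (n - 1) m μ ω N) atTop (nhds (Φ' m ω))) :
    (∀ m : ℕ, 1 ≤ m → ∀ ω : ℝ, Φ m ω = BsplineFT 0 m ω * Φ' m ω) ∧
    (∀ ω : ℝ, Φ 0 ω = BsplineFT 0 1 ω * Φ' 0 ω) := by
  obtain ⟨p, rfl⟩ : ∃ p, n = p + 1 := ⟨n - 1, by omega⟩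
  simp only [Nat.add_sub_cancel] at hΦ'
  have key : ∀ m : ℕ, 1 ≤ m → ∀ ω : ℝ, Φ m ω = BsplineFT 0 m ω * Φ' m ω := by
    intro m hm ω
    by_cases hω : ω = 0
    · subst hω
      rw [BsplineFT, if_pos rfl, one_mul]
      refine tendsto_nhds_unique (hΦ m 0) ((hΦ' m 0).congr ?_)
      intro N
      exact (pp_zero p m hm (by omega) μ N).symm
    · have h1 := (hΦ m ω).mul (DD_lim ω)
      have h2 := (hΦ' m ω).const_mul (DD ω m)
      have h3 : Φ m ω * (Complex.I * ω) = DD ω m * Φ' m ω := by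
        refine tendsto_nhds_unique_of_eventuallyEq h1 h2 ?_
        filter_upwards [eventually_ge_atTop m] with N hN
        exact pp_step p m hm (by omega) μ ω N hN
      have hω' : (ω : ℂ) ≠ 0 := by exact_mod_cast hω
      have hI : Complex.I * (ω : ℂ) ≠ 0 := mul_ne_zero Complex.I_ne_zero hω'
      have hB : BsplineFT 0 m ω = DD ω m / (Complex.I * ω) := by
        rw [BsplineFT, if_neg hω, DD, zpow_neg, zpow_natCast, zero_add, pow_one,
          ← div_eq_mul_inv, ← div_eq_mul_inv, div_div_eq_mul_div, mul_comm]
      rw [hB, div_mul_eq_mul_div, ← h3, mul_div_cancel_right₀ _ hI]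
  refine ⟨key, ?_⟩
  intro ω
  have e1 : Φ 0 ω = (1 + Complex.exp (-(Complex.I * ω) / 2 ^ (0+1))) / 2 * Φ 1 ω := by
    refine tendsto_nhds_unique_of_eventuallyEq (hΦ 0 ω) ((hΦ 1 ω).const_mul _) ?_
    filter_upwards [eventually_gt_atTop 0] with N hN
    exact pp_head _ μ ω N hN
  have e2 : Φ' 0 ω = (1 + Complex.exp (-(Complex.I * ω) / 2 ^ (0+1))) / 2 * Φ' 1 ω := by
    refine tendsto_nhds_unique_of_eventuallyEq (hΦ' 0 ω) ((hΦ' 1 ω).const_mul _) ?_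
    filter_upwards [eventually_gt_atTop 0] with N hN
    exact pp_head _ μ ω N hN
  rw [e1, e2, key 1 le_rfl ω]
  ring
end

section
/- (Strang–Fix conditions, Corollary 4.2, case m ≥ 1.) For every integer n ≥ 2, every real μ > 1, and every integer m ≥ 1, there exists a continuous function F : ℝ → ℂ with F(ω) ≠ 0 for every ω ∈ ℝ such that Φ^{(n,m)}(ω) = ((1 − e^{-iω 2^{-m}})/(iω 2^{-m}))^{n-1} · F(ω) for all ω ≠ 0. In particular Φ^{(n,m)} has a zero of order exactly n − 1 at every point ω = 2^{m+1} π α with α ∈ ℤ \ {0}. -/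
open MeasureTheory Filter Complex

lemma sf_symbol (n k : ℕ) (hn : 2 ≤ n) (hk : 1 ≤ k) (μ : ℝ) (z : ℂ) :
    symbolNS n k μ z = ((1 + z) / 2) ^ (n - 1) *
      (((((2 : ℝ) ^ ((k : ℝ) ^ (-μ)))⁻¹ : ℝ) : ℂ) / 4 *
        ((1 + z) ^ 2 + 4 * ((((2 : ℝ) ^ ((k : ℝ) ^ (-μ)) : ℝ) : ℂ) - 1) * z)) := by
  obtain ⟨p, rfl⟩ : ∃ p, n = p + 1 := ⟨n - 1, by omega⟩
  set c : ℝ := (2 : ℝ) ^ ((k : ℝ) ^ (-μ)) with hc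
  have hpow : (2 : ℝ) ^ (-(((p + 1 : ℕ) : ℝ) + 1 + (k : ℝ) ^ (-μ))) = (2 ^ (p + 2))⁻¹ * c⁻¹ := by
    rw [Real.rpow_neg (by norm_num), Real.rpow_add (by norm_num), mul_inv, hc]
    congr 2
    rw [← Real.rpow_natCast]
    congr 1
    push_cast
    ring
  have h1 : ∀ α ∈ Finset.range (p + 1 + 2), (maskNS (p + 1) k μ (α : ℤ) : ℂ) * z ^ α =
      (((2 : ℂ) ^ (p + 2))⁻¹ * (c : ℂ)⁻¹) * (z ^ α * ((p + 2).choose α : ℂ)) +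
      (((2 : ℂ) ^ (p + 2))⁻¹ * (c : ℂ)⁻¹) * (4 * ((c : ℂ) - 1)) *
        (z ^ α * (binomZ p ((α : ℤ) - 1) : ℂ)) := by
    intro α hα
    rw [Finset.mem_range] at hα
    unfold maskNS
    rw [if_neg (by omega), if_pos (by constructor <;> push_cast <;> omega), hpow, ← hc]
    have : binomZ (p + 1 + 1) (α : ℤ) = ((p + 2).choose α : ℝ) := by simp [binomZ]
    rw [this]
    simp only [Nat.add_sub_cancel]
    push_cast
    ring
  have h2 : ∑ α ∈ Finset.range (p + 1 + 2), z ^ α * ((p + 2).choose α : ℂ) = (1 + z) ^ (p + 2) := by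
    rw [add_comm 1 z, add_pow]
    refine Finset.sum_congr rfl fun i _ => ?_
    simp
  have h3 : ∑ α ∈ Finset.range (p + 1 + 2), z ^ α * (binomZ p ((α : ℤ) - 1) : ℂ)
      = z * (1 + z) ^ p := by
    rw [Finset.sum_range_succ', Finset.sum_range_succ]
    have e0 : binomZ p (((0 : ℕ) : ℤ) - 1) = 0 := by simp [binomZ]
    have e1 : ∀ i : ℕ, binomZ p (((i + 1 : ℕ) : ℤ) - 1) = (p.choose i : ℝ) := by
      intro i; simp [binomZ]
    rw [e0, e1, Nat.choose_succ_self, add_comm 1 z, add_pow, Finset.mul_sum]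
    simp only [e1]
    simp only [Nat.cast_zero, Complex.ofReal_zero, mul_zero, add_zero]
    refine Finset.sum_congr rfl fun i _ => ?_
    simp
    ring
  unfold symbolNS
  rw [Finset.sum_congr rfl h1, Finset.sum_add_distrib, ← Finset.mul_sum, ← Finset.mul_sum, h2, h3]
  simp only [Nat.add_sub_cancel, div_pow]
  have h2p : (2 : ℂ) ^ p ≠ 0 := pow_ne_zero _ (by norm_num)
  have e : (2 : ℂ) ^ (p + 2) = 2 ^ p * 4 := by rw [pow_add]; norm_num
  rw [e, mul_inv]
  push_cast
  ring

/-- the deviation from one -/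
noncomputable def sfF (μ : ℝ) (k : ℕ) (ω : ℝ) : ℂ :=
  ((-(((2 : ℝ) ^ ((k : ℝ) ^ (-μ)))⁻¹ * ((1 - Real.cos (ω / 2 ^ (k + 1))) / 2)) : ℝ) : ℂ)

lemma sf_factor (n k : ℕ) (hn : 2 ≤ n) (hk : 1 ≤ k) (μ : ℝ) (ω : ℝ) :
    symbolNS n k μ (Complex.exp (-(Complex.I * ω) / 2 ^ (k + 1))) =
      ((1 + Complex.exp (-(Complex.I * ω) / 2 ^ (k + 1))) / 2) ^ (n - 1) *
      (Complex.exp (-(Complex.I * ω) / 2 ^ (k + 1)) * (1 + sfF μ k ω)) := by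
  rw [sf_symbol n k hn hk]
  congr 1
  unfold sfF
  set c : ℝ := (2 : ℝ) ^ ((k : ℝ) ^ (-μ)) with hc
  have hc0 : (c : ℂ) ≠ 0 := by
    have : 0 < c := Real.rpow_pos_of_pos (by norm_num) _
    exact_mod_cast this.ne'
  have hz : Complex.exp (-(Complex.I * ω) / 2 ^ (k + 1)) ≠ 0 := Complex.exp_ne_zero _
  set z := Complex.exp (-(Complex.I * ω) / 2 ^ (k + 1)) with hzdef
  have hcos : (Real.cos (ω / 2 ^ (k + 1)) : ℂ) = (z⁻¹ + z) / 2 := by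
    rw [hzdef, ← Complex.exp_neg, Complex.ofReal_cos, Complex.cos]
    push_cast
    rw [show (ω : ℂ) / 2 ^ (k + 1) * Complex.I = -(-(Complex.I * ω) / 2 ^ (k + 1)) by ring,
      show -((ω : ℂ) / 2 ^ (k + 1)) * Complex.I = -(Complex.I * ω) / 2 ^ (k + 1) by ring]
  push_cast at hcos ⊢
  rw [hcos]
  field_simp
  ring

lemma sf_c_inv (μ : ℝ) (k : ℕ) (hk : 1 ≤ k) :
    0 < ((2 : ℝ) ^ ((k : ℝ) ^ (-μ)))⁻¹ ∧ ((2 : ℝ) ^ ((k : ℝ) ^ (-μ)))⁻¹ < 1 := by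
  have hk' : (0 : ℝ) < k := by exact_mod_cast hk
  have h1 : (1 : ℝ) < (2 : ℝ) ^ ((k : ℝ) ^ (-μ)) :=
    Real.one_lt_rpow (by norm_num) (Real.rpow_pos_of_pos hk' _)
  exact ⟨by positivity, inv_lt_one_of_one_lt₀ h1⟩

lemma sf_ne (μ : ℝ) (k : ℕ) (hk : 1 ≤ k) (ω : ℝ) : 1 + sfF μ k ω ≠ 0 := by
  obtain ⟨h0, h1⟩ := sf_c_inv μ k hk
  unfold sfF
  set c := ((2 : ℝ) ^ ((k : ℝ) ^ (-μ)))⁻¹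
  have := Real.neg_one_le_cos (ω / 2 ^ (k + 1))
  have h : (1 : ℝ) + -(c * ((1 - Real.cos (ω / 2 ^ (k + 1))) / 2)) ≠ 0 := by
    have : c * ((1 - Real.cos (ω / 2 ^ (k + 1))) / 2) ≤ c * 1 := by
      apply mul_le_mul_of_nonneg_left _ h0.le
      linarith
    linarith
  exact_mod_cast h

lemma sf_bound (μ : ℝ) (m : ℕ) (hm : 1 ≤ m) (j : ℕ) (R : ℝ) (ω : ℝ) (h : |ω| ≤ R) :
    ‖sfF μ (m + j) ω‖ ≤ R ^ 2 * (1 / 4) ^ j := by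
  obtain ⟨h0, h1⟩ := sf_c_inv μ (m + j) (by omega)
  unfold sfF
  set c := ((2 : ℝ) ^ (((m + j : ℕ) : ℝ) ^ (-μ)))⁻¹
  have hl := Real.cos_le_one (ω / 2 ^ (m + j + 1))
  have hs := Real.one_sub_sq_div_two_le_cos (x := ω / 2 ^ (m + j + 1))
  rw [Complex.norm_real, norm_neg, Real.norm_eq_abs, abs_of_nonneg (by
    apply mul_nonneg h0.le; linarith)]
  have h2 : c * ((1 - Real.cos (ω / 2 ^ (m + j + 1))) / 2) ≤
      1 * ((1 - Real.cos (ω / 2 ^ (m + j + 1))) / 2) :=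
    mul_le_mul_of_nonneg_right h1.le (by linarith)
  have h3 : (ω / 2 ^ (m + j + 1)) ^ 2 ≤ R ^ 2 * (1 / 4) ^ j := by
    have e : (ω / 2 ^ (m + j + 1)) ^ 2 = ω ^ 2 * ((1 / 4) ^ (m + 1) * (1 / 4) ^ j) := by
      rw [← pow_add, div_pow, ← pow_mul, mul_comm (m + j + 1) 2, pow_mul, one_div, inv_pow,
        show m + 1 + j = m + j + 1 by omega, div_eq_mul_inv]
      norm_num
    rw [e]
    have hw : ω ^ 2 ≤ R ^ 2 := sq_le_sq' (by linarith [neg_abs_le ω]) (by linarith [le_abs_self ω])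
    have hq : (1 / 4 : ℝ) ^ (m + 1) ≤ 1 := pow_le_one₀ (by norm_num) (by norm_num)
    apply mul_le_mul hw _ (by positivity) (by positivity)
    exact mul_le_of_le_one_left (by positivity) hq
  have h4 := sq_nonneg (ω / 2 ^ (m + j + 1))
  linarith

lemma sf_geo (R : ℝ) : Summable (fun j : ℕ => R ^ 2 * (1 / 4 : ℝ) ^ j) :=
  (summable_geometric_of_lt_one (by norm_num) (by norm_num)).mul_left _

lemma sf_summable (μ : ℝ) (m : ℕ) (hm : 1 ≤ m) (ω : ℝ) :
    Summable (fun j => ‖sfF μ (m + j) ω‖) :=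
  Summable.of_nonneg_of_le (fun _ => norm_nonneg _)
    (fun j => sf_bound μ m hm j |ω| ω le_rfl) (sf_geo |ω|)

lemma sf_cont (μ : ℝ) (m : ℕ) (hm : 1 ≤ m) :
    Continuous (fun ω : ℝ => ∏' j, (1 + sfF μ (m + j) ω)) := by
  have hc : ∀ k, Continuous (sfF μ k) := by
    intro k
    unfold sfF
    fun_prop
  rw [continuous_iff_continuousAt]
  intro x
  have hopen : IsOpen (Metric.ball (0 : ℝ) (|x| + 1)) := Metric.isOpen_ball
  have H := (sf_geo (|x| + 1)).hasProdLocallyUniformlyOn_nat_one_add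
    (f := fun j ω => sfF μ (m + j) ω) hopen
    (Eventually.of_forall fun j ω hω => sf_bound μ m hm j (|x| + 1) ω (by
      have : |ω| < |x| + 1 := by simpa using hω
      exact this.le))
    (fun j => (hc _).continuousOn)
  have H2 := (hasProdLocallyUniformlyOn_iff_tendstoLocallyUniformlyOn.mp H).continuousOn
    (Frequently.of_forall fun s => by
      apply Continuous.continuousOn
      exact continuous_finsetProd _ fun i _ => continuous_const.add (hc _))
  exact H2.continuousAt (hopen.mem_nhds (by simp))

lemma sf_E (w : ℂ) (m j : ℕ) :
    ∏ i ∈ Finset.range j, Complex.exp (w / 2 ^ (m + i + 1)) =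
      Complex.exp (w / 2 ^ m * (1 - (1 / 2) ^ j)) := by
  induction j with
  | zero => simp
  | succ j ih =>
    rw [Finset.prod_range_succ, ih, ← Complex.exp_add]
    congr 1
    rw [pow_add, pow_add, one_div, inv_pow, inv_pow, pow_succ 2 j]
    have : (2 : ℂ) ^ m ≠ 0 := pow_ne_zero _ (by norm_num)
    have : (2 : ℂ) ^ j ≠ 0 := pow_ne_zero _ (by norm_num)
    field_simp
    ring

lemma sf_P (w : ℂ) (m j : ℕ) :
    (∏ i ∈ Finset.range j, ((1 + Complex.exp (w / 2 ^ (m + i + 1))) / 2)) *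
      (2 ^ j * (1 - Complex.exp (w / 2 ^ (m + j)))) = 1 - Complex.exp (w / 2 ^ m) := by
  induction j with
  | zero => simp
  | succ j ih =>
    rw [Finset.prod_range_succ, ← ih]
    have : Complex.exp (w / 2 ^ (m + j)) = Complex.exp (w / 2 ^ (m + j + 1)) ^ 2 := by
      rw [← Complex.exp_nat_mul]
      congr 1
      rw [pow_succ]
      have : (2 : ℂ) ^ (m + j) ≠ 0 := pow_ne_zero _ (by norm_num)
      push_cast
      field_simp
    rw [this, ← add_assoc, pow_succ]
    ring

lemma sf_half : Tendsto (fun j : ℕ => ((1 / 2 : ℝ)) ^ j) atTop (nhds 0) :=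
  tendsto_pow_atTop_nhds_zero_of_lt_one (by norm_num) (by norm_num)

lemma sf_Q (w : ℂ) (m : ℕ) :
    Tendsto (fun j : ℕ => (2 : ℂ) ^ j * (1 - Complex.exp (w / 2 ^ (m + j)))) atTop
      (nhds (-(w / 2 ^ m))) := by
  have hd : HasDerivAt (fun t : ℝ => Complex.exp ((t : ℂ) * (w / 2 ^ m))) (w / 2 ^ m) 0 := by
    have h1 : HasDerivAt (fun t : ℝ => (t : ℂ) * (w / 2 ^ m)) (1 * (w / 2 ^ m)) 0 :=
      (HasDerivAt.ofReal_comp (hasDerivAt_id (0 : ℝ))).mul_const _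
    have h2 := h1.cexp
    simpa using h2
  have hs := hd.tendsto_slope_zero_right
  have ht : Tendsto (fun j : ℕ => ((1 / 2 : ℝ)) ^ j) atTop (nhdsWithin 0 (Set.Ioi 0)) :=
    tendsto_nhdsWithin_iff.mpr ⟨sf_half, Eventually.of_forall fun j => by
      simp only [Set.mem_Ioi]; positivity⟩
  have h := (hs.comp ht).neg
  refine h.congr fun j => ?_
  have e : ((1 / 2 : ℂ)) ^ j * (w / 2 ^ m) = w / 2 ^ (m + j) := by
    rw [pow_add, one_div, inv_pow]
    have : (2 : ℂ) ^ m ≠ 0 := pow_ne_zero _ (by norm_num)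
    have : (2 : ℂ) ^ j ≠ 0 := pow_ne_zero _ (by norm_num)
    field_simp
  simp only [Function.comp, zero_add, Complex.real_smul]
  push_cast
  rw [e]
  simp
  ring

lemma sf_Plim (w : ℂ) (hw : w ≠ 0) (m : ℕ) :
    Tendsto (fun j : ℕ => ∏ i ∈ Finset.range j, ((1 + Complex.exp (w / 2 ^ (m + i + 1))) / 2))
      atTop (nhds ((1 - Complex.exp (w / 2 ^ m)) / (-(w / 2 ^ m)))) := by
  have hne : -(w / 2 ^ m) ≠ 0 :=
    neg_ne_zero.mpr (div_ne_zero hw (pow_ne_zero _ (by norm_num)))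
  have hQ := sf_Q w m
  have h := (tendsto_const_nhds (x := 1 - Complex.exp (w / 2 ^ m))).div hQ hne
  refine h.congr' ?_
  filter_upwards [hQ.eventually_ne hne] with j hj
  rw [← sf_P w m j]
  simp only [Pi.div_apply]
  exact mul_div_cancel_right₀ _ hj

lemma sf_Elim (w : ℂ) (m : ℕ) :
    Tendsto (fun j : ℕ => ∏ i ∈ Finset.range j, Complex.exp (w / 2 ^ (m + i + 1)))
      atTop (nhds (Complex.exp (w / 2 ^ m))) := by
  simp only [sf_E]
  have h : Tendsto (fun j : ℕ => ((1 / 2 : ℂ)) ^ j) atTop (nhds 0) :=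
    tendsto_pow_atTop_nhds_zero_of_norm_lt_one (by norm_num)
  have h2 := ((tendsto_const_nhds (x := (1 : ℂ))).sub h).const_mul (w / 2 ^ m)
  have h3 := h2.cexp
  simpa using h3

/-- Strang–Fix conditions (Corollary 4.2, case `m ≥ 1`): `Φ^{(n,m)}` factors as
`((1 − e^{-iω2^{-m}})/(iω2^{-m}))^{n-1}` times a continuous nowhere-vanishing function;
in particular it vanishes (to order exactly `n − 1`) at `ω = 2^{m+1}πα`, `α ∈ ℤ \ {0}`. -/
theorem strang_fix (n : ℕ) (hn : 2 ≤ n) (μ : ℝ) (hμ : 1 < μ) (m : ℕ) (hm : 1 ≤ m)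
    (Φ : ℝ → ℂ)
    (hΦ : ∀ ω : ℝ, Tendsto (fun N => partialProdNS n m μ ω N) atTop (nhds (Φ ω))) :
    ∃ F : ℝ → ℂ, Continuous F ∧ (∀ ω : ℝ, F ω ≠ 0) ∧
      (∀ ω : ℝ, ω ≠ 0 →
        Φ ω = ((1 - Complex.exp (-(Complex.I * ω) * 2 ^ (-(m : ℤ)))) /
          (Complex.I * ω * 2 ^ (-(m : ℤ)))) ^ (n - 1) * F ω) ∧
      (∀ α : ℤ, α ≠ 0 → Φ (2 ^ (m + 1) * Real.pi * α) = 0) := by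
  have hzp : ((2 : ℂ) ^ (-(m : ℤ))) = (2 ^ m)⁻¹ := by rw [zpow_neg, zpow_natCast]
  have key : ∀ ω : ℝ, ω ≠ 0 →
        Φ ω = ((1 - Complex.exp (-(Complex.I * ω) * 2 ^ (-(m : ℤ)))) /
          (Complex.I * ω * 2 ^ (-(m : ℤ)))) ^ (n - 1) *
          (Complex.exp (-(Complex.I * ω) / 2 ^ m) * ∏' j, (1 + sfF μ (m + j) ω)) := by
    intro ω hω
    have hw : -(Complex.I * (ω : ℂ)) ≠ 0 :=
      neg_ne_zero.mpr (mul_ne_zero Complex.I_ne_zero (by exact_mod_cast hω))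
    have h1 : Tendsto (fun j => partialProdNS n m μ ω (j + m)) atTop (nhds (Φ ω)) :=
      (tendsto_add_atTop_iff_nat m).mpr (hΦ ω)
    have h2 := ((sf_Plim _ hw m).pow (n - 1)).mul ((sf_Elim (-(Complex.I * (ω : ℂ))) m).mul
      (multipliable_one_add_of_summable (sf_summable μ m hm ω)).hasProd.tendsto_prod_nat)
    have h3 := tendsto_nhds_unique h1 (h2.congr fun j => ?_)
    · rw [h3, hzp]
      congr 3
      rw [div_eq_mul_inv (-(Complex.I * (ω : ℂ)))]
      ring
    · unfold partialProdNS
      rw [Finset.prod_Ico_eq_prod_range, Nat.add_sub_cancel, ← Finset.prod_pow,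
        ← Finset.prod_mul_distrib, ← Finset.prod_mul_distrib]
      refine Finset.prod_congr rfl fun i _ => ?_
      rw [sf_factor n (m + i) hn (by omega)]
  refine ⟨fun ω => Complex.exp (-(Complex.I * ω) / 2 ^ m) * ∏' j, (1 + sfF μ (m + j) ω),
    ?_, ?_, key, ?_⟩
  · exact Continuous.mul (by fun_prop) (sf_cont μ m hm)
  · intro ω
    exact mul_ne_zero (Complex.exp_ne_zero _)
      (tprod_one_add_ne_zero_of_summable (fun j => sf_ne μ (m + j) (by omega) ω)
        (sf_summable μ m hm ω))
  · intro α hα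
    have hne : (2 ^ (m + 1) * Real.pi * α : ℝ) ≠ 0 :=
      mul_ne_zero (mul_ne_zero (by positivity) Real.pi_ne_zero) (by exact_mod_cast hα)
    rw [key _ hne]
    have he : Complex.exp (-(Complex.I * ((2 ^ (m + 1) * Real.pi * α : ℝ) : ℂ)) * 2 ^ (-(m : ℤ)))
        = 1 := by
      rw [Complex.exp_eq_one_iff]
      refine ⟨-α, ?_⟩
      rw [hzp]
      have : (2 : ℂ) ^ m ≠ 0 := pow_ne_zero _ (by norm_num)
      push_cast
      rw [pow_succ]
      field_simp
    rw [he, sub_self, zero_div, zero_pow (by omega), zero_mul]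
end

section
/- (Polynomial reproduction, Theorem 4.3.) Let n ≥ 2 be an integer, μ > 1 real, and m ≥ 1 an integer. Suppose φ : ℝ → ℝ is continuous and compactly supported and its Fourier transform ∫_ℝ φ(x) e^{-iωx} dx equals Φ^{(n,m)}(ω) for all ω ∈ ℝ. Then for every polynomial p of degree at most n − 2 there exists a sequence of real numbers (γ_α)_{α∈ℤ} such that p(x) = Σ_{α∈ℤ} γ_α φ(x − 2^{-m} α) for every x ∈ ℝ (the sum being locally finite since φ has compact support). -/
open MeasureTheory Filter Complex

lemma aux_symbol_eq (r k : ℕ) (hk : 1 ≤ k) (μ : ℝ) (z : ℂ) :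
    symbolNS (r+1) k μ z = (((2 : ℝ) ^ (-(((r+1 : ℕ) : ℝ) + 1 + (k : ℝ) ^ (-μ))) : ℝ) : ℂ) *
      ((1+z)^(r+2) + ((4 * ((2 : ℝ) ^ ((k : ℝ) ^ (-μ)) - 1) : ℝ) : ℂ) * z * (1+z)^r) := by
  have h1 : ∀ α ∈ Finset.range (r+1+2), (maskNS (r+1) k μ (α : ℤ) : ℂ) * z ^ α =
      (((2 : ℝ) ^ (-(((r+1 : ℕ) : ℝ) + 1 + (k : ℝ) ^ (-μ))) : ℝ) : ℂ) *
      (((r+2).choose α : ℂ) * z^α + ((4 * ((2 : ℝ) ^ ((k : ℝ) ^ (-μ)) - 1) : ℝ) : ℂ) *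
        ((binomZ r ((α:ℤ)-1) : ℂ) * z^α)) := by
    intro α hα
    have h2 : (0:ℤ) ≤ α ∧ (α:ℤ) ≤ ((r+1 : ℕ) : ℤ) + 1 := by
      have := Finset.mem_range.1 hα
      omega
    unfold maskNS
    rw [if_neg (by omega), if_pos h2]
    have h3 : binomZ (r+1+1) (α:ℤ) = ((r+2).choose α : ℝ) := by simp [binomZ]
    rw [h3]
    simp only [Nat.add_sub_cancel]
    push_cast
    ring
  unfold symbolNS
  rw [Finset.sum_congr rfl h1, ← Finset.mul_sum, Finset.sum_add_distrib, ← Finset.mul_sum]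
  congr 1
  congr 1
  · rw [add_comm 1 z, add_pow]
    refine Finset.sum_congr rfl fun i _ => ?_
    simp; ring
  · rw [Finset.sum_range_succ', mul_assoc]
    congr 1
    rw [Finset.sum_range_succ]
    have h5 : ∀ i : ℕ, binomZ r (((i+1:ℕ):ℤ)-1) = (r.choose i : ℝ) := by
      intro i; simp [binomZ]
    have h6 : binomZ r (((0:ℕ):ℤ)-1) = 0 := by simp [binomZ]
    simp only [h5, h6]
    rw [Nat.choose_succ_self]
    rw [add_comm 1 z, add_pow, Finset.mul_sum]
    simp
    refine Finset.sum_congr rfl fun i _ => ?_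
    ring

lemma aux_mask_nonneg (n k : ℕ) (hk : 1 ≤ k) (μ : ℝ) (α : ℤ) : 0 ≤ maskNS n k μ α := by
  have hb : ∀ p q, 0 ≤ binomZ p q := by
    intro p q; unfold binomZ; split_ifs <;> positivity
  have h1 : (1:ℝ) ≤ (2 : ℝ) ^ ((k : ℝ) ^ (-μ)) :=
    Real.one_le_rpow (by norm_num) (by positivity)
  unfold maskNS
  rw [if_neg (by omega)]
  split_ifs
  · have := hb (n+1) α
    have := hb (n-1) (α-1)
    have : 0 ≤ (2 : ℝ) ^ ((k : ℝ) ^ (-μ)) - 1 := by linarith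
    positivity
  · exact le_rfl

lemma aux_symbol_one (r k : ℕ) (hk : 1 ≤ k) (μ : ℝ) : symbolNS (r+1) k μ 1 = 1 := by
  rw [aux_symbol_eq r k hk]
  have h : (2 : ℝ) ^ (-(((r+1 : ℕ) : ℝ) + 1 + (k : ℝ) ^ (-μ))) *
      ((1+1)^(r+2) + (4 * ((2 : ℝ) ^ ((k : ℝ) ^ (-μ)) - 1)) * 1 * (1+1)^r) = 1 := by
    rw [Real.rpow_neg (by norm_num), Real.rpow_add (by norm_num)]
    have : (2:ℝ) ^ (((r+1 : ℕ) : ℝ) + 1) = 2^(r+2) := by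
      rw [← Real.rpow_natCast]; congr 1; push_cast; ring
    rw [this]
    have : (0:ℝ) < (2 : ℝ) ^ ((k : ℝ) ^ (-μ)) := by positivity
    field_simp
    ring
  exact_mod_cast h

lemma aux_symbol_norm_le (r k : ℕ) (hk : 1 ≤ k) (μ : ℝ) (z : ℂ) (hz : ‖z‖ = 1) :
    ‖symbolNS (r+1) k μ z‖ ≤ 1 := by
  have h1 := aux_symbol_one r k hk μ
  unfold symbolNS at h1 ⊢
  refine (norm_sum_le _ _).trans ?_
  have : ∑ α ∈ Finset.range (r+1+2), maskNS (r+1) k μ (α : ℤ) = 1 := by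
    simp only [one_pow, mul_one] at h1
    exact_mod_cast h1
  rw [← this]
  refine Finset.sum_le_sum fun i _ => ?_
  rw [norm_mul, norm_pow, hz, one_pow, mul_one, Complex.norm_real, Real.norm_of_nonneg]
  exact aux_mask_nonneg _ _ hk _ _

lemma aux_symbol_bound (r k : ℕ) (hk : 1 ≤ k) (μ : ℝ) :
    ∃ K : ℝ, 0 ≤ K ∧ ∀ z : ℂ, ‖z‖ = 1 → ‖symbolNS (r+1) k μ z‖ ≤ K * ‖1+z‖^r := by
  refine ⟨‖(((2 : ℝ) ^ (-(((r+1 : ℕ) : ℝ) + 1 + (k : ℝ) ^ (-μ))) : ℝ) : ℂ)‖ *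
    (4 + ‖((4 * ((2 : ℝ) ^ ((k : ℝ) ^ (-μ)) - 1) : ℝ) : ℂ)‖), by positivity, fun z hz => ?_⟩
  rw [aux_symbol_eq r k hk]
  generalize (((2 : ℝ) ^ (-(((r+1 : ℕ) : ℝ) + 1 + (k : ℝ) ^ (-μ))) : ℝ) : ℂ) = a
  generalize ((4 * ((2 : ℝ) ^ ((k : ℝ) ^ (-μ)) - 1) : ℝ) : ℂ) = b
  have e : a * ((1+z)^(r+2) + b * z * (1+z)^r) = a * ((1+z)^2 + b*z) * (1+z)^r := by ring
  rw [e, norm_mul, norm_mul, norm_pow]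
  have h2 : ‖1+z‖ ≤ 2 := by
    refine (norm_add_le _ _).trans ?_
    rw [hz]; norm_num
  gcongr
  refine (norm_add_le _ _).trans ?_
  rw [norm_pow, norm_mul, hz, mul_one]
  have := norm_nonneg (1+z)
  nlinarith

lemma aux_exp_norm (ω : ℝ) (k : ℕ) : ‖Complex.exp (-(Complex.I * ω) / 2 ^ (k + 1))‖ = 1 := by
  have : -(Complex.I * ω) / 2 ^ (k + 1) = ((-ω / 2^(k+1) : ℝ) : ℂ) * Complex.I := by
    push_cast; ring
  rw [this, Complex.norm_exp_ofReal_mul_I]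

lemma aux_Phi_zero (r m : ℕ) (hm : 1 ≤ m) (μ : ℝ) (Φ : ℝ → ℂ)
    (hΦ : ∀ ω : ℝ, Tendsto (fun N => partialProdNS (r+1) m μ ω N) atTop (nhds (Φ ω))) :
    Φ 0 = 1 := by
  refine tendsto_nhds_unique (hΦ 0) ?_
  have : (fun N => partialProdNS (r+1) m μ 0 N) = fun _ => 1 := by
    funext N
    unfold partialProdNS
    refine Finset.prod_eq_one fun k hk => ?_
    have := (Finset.mem_Ico.1 hk).1
    simp [aux_symbol_one r k (by omega)]
  rw [this]
  exact tendsto_const_nhds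

lemma aux_Phi_bound (r m : ℕ) (hm : 1 ≤ m) (μ : ℝ) (Φ : ℝ → ℂ)
    (hΦ : ∀ ω : ℝ, Tendsto (fun N => partialProdNS (r+1) m μ ω N) atTop (nhds (Φ ω)))
    (l : ℤ) (hl : l ≠ 0) :
    ∃ K : ℝ, 0 ≤ K ∧ ∀ s : ℝ, ‖Φ (2 * Real.pi * l * 2^m + s)‖ ≤ K * |s|^r := by
  obtain ⟨t, q, hq, hlq⟩ : ∃ (t : ℕ) (q : ℤ), Odd q ∧ l = 2^t * q := by
    have hf : FiniteMultiplicity (2:ℤ) l := Int.finiteMultiplicity_iff.2 ⟨by norm_num, hl⟩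
    obtain ⟨c, hc, hc2⟩ := hf.exists_eq_pow_mul_and_not_dvd
    exact ⟨_, c, by rw [← Int.not_even_iff_odd, even_iff_two_dvd]; exact hc2, hc⟩
  obtain ⟨K, hK, hKb⟩ := aux_symbol_bound r (m+t) (by omega) μ
  refine ⟨K, hK, fun s => ?_⟩
  refine le_of_tendsto (hΦ _).norm ?_
  filter_upwards [eventually_ge_atTop (m+t+1)] with N hN
  unfold partialProdNS
  rw [norm_prod, ← Finset.mul_prod_erase _ _ (Finset.mem_Ico.2 ⟨by omega, by omega⟩ : m+t ∈ Finset.Ico m N)]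
  rw [← mul_one (K * |s|^r)]
  refine mul_le_mul ?_ ?_ (Finset.prod_nonneg fun _ _ => norm_nonneg _) (by positivity)
  · refine (hKb _ (aux_exp_norm _ _)).trans ?_
    gcongr
    obtain ⟨j, hj⟩ := hq
    have e : Complex.exp (-(Complex.I * ((2 * Real.pi * l * 2^m + s : ℝ) : ℂ)) / 2 ^ (m+t + 1)) =
        - Complex.exp (Complex.I * ((-s / 2^(m+t+1) : ℝ) : ℂ)) := by
      have e1 : -(Complex.I * ((2 * Real.pi * l * 2^m + s : ℝ) : ℂ)) / 2 ^ (m+t + 1) =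
          Complex.I * ((-s / 2^(m+t+1) : ℝ) : ℂ) + (Real.pi * Complex.I + ((-j-1 : ℤ) : ℂ) * (2 * Real.pi * Complex.I)) := by
        rw [hlq, hj]
        push_cast
        field_simp
        ring
      rw [e1, Complex.exp_add, Complex.exp_add, Complex.exp_int_mul_two_pi_mul_I, Complex.exp_pi_mul_I]
      ring
    rw [e, ← sub_eq_add_neg, norm_sub_rev]
    refine Real.norm_exp_I_mul_ofReal_sub_one_le.trans ?_
    rw [Real.norm_eq_abs, abs_div, abs_neg, abs_of_pos (by positivity : (0:ℝ) < 2^(m+t+1))]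
    exact div_le_self (abs_nonneg _) (one_le_pow₀ (by norm_num))
  · refine Finset.prod_le_one (fun _ _ => norm_nonneg _) fun k hk => ?_
    have := (Finset.mem_Ico.1 (Finset.mem_of_mem_erase hk)).1
    exact aux_symbol_norm_le r k (by omega) μ _ (aux_exp_norm _ _)

lemma aux_bounded_supp (φ : ℝ → ℝ) (hφs : HasCompactSupport φ) :
    ∃ R : ℝ, 0 ≤ R ∧ ∀ x, R < |x| → φ x = 0 := by
  obtain ⟨R, hR⟩ := hφs.isCompact.isBounded.subset_closedBall 0
  refine ⟨max R 0, le_max_right _ _, fun x hx => ?_⟩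
  by_contra h
  have := hR (subset_tsupport _ (Function.mem_support.2 h))
  simp [Metric.mem_closedBall] at this
  have := le_max_left R 0
  linarith

lemma aux_finite_int (B : ℝ) : {α : ℤ | |(α:ℝ)| ≤ B}.Finite := by
  refine (Set.finite_Icc (-⌈B⌉) ⌈B⌉).subset fun α hα => ?_
  have h := abs_le.1 (show |(α:ℝ)| ≤ B from hα)
  have h2 := Int.le_ceil B
  constructor
  · have : ((-⌈B⌉ : ℤ) : ℝ) ≤ α := by push_cast; linarith
    exact_mod_cast this
  · have : (α:ℝ) ≤ (⌈B⌉:ℤ) := by linarith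
    exact_mod_cast this

lemma aux_moments (φ : ℝ → ℝ) (hφc : Continuous φ) (hφs : HasCompactSupport φ) (r : ℕ)
    (w K : ℝ) (hK : 0 ≤ K)
    (hb : ∀ s : ℝ, ‖∫ x : ℝ, (φ x : ℂ) * Complex.exp (-(Complex.I * ((w + s : ℝ) : ℂ) * x))‖ ≤ K * |s|^r) :
    ∀ j < r, ∫ x : ℝ, ((x^j * φ x : ℝ) : ℂ) * Complex.exp (-(Complex.I * w * x)) = 0 := by
  obtain ⟨R, hR0, hR⟩ := aux_bounded_supp φ hφs
  have hint : ∀ g : ℝ → ℂ, Continuous g → Integrable (fun x => (φ x : ℂ) * g x) := by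
    intro g hg
    refine Continuous.integrable_of_hasCompactSupport (by fun_prop) ?_
    refine HasCompactSupport.mul_right ?_
    exact hφs.comp_left (g := fun y : ℝ => (y:ℂ)) (by simp)
  intro j
  induction j using Nat.strong_induction_on with
  | _ j ih =>
  intro hj
  -- expansion
  set M : ℕ → ℂ := fun i => ∫ x : ℝ, ((x^i * φ x : ℝ) : ℂ) * Complex.exp (-(Complex.I * w * x)) with hM
  set C : ℝ := ∫ x : ℝ, |φ x| with hC
  have hC0 : 0 ≤ C := integral_nonneg fun _ => abs_nonneg _
  have key : ∀ s : ℝ, |s| ≤ 1 → ‖((-Complex.I) * s)^j / (j.factorial : ℂ) * M j‖ ≤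
      (K + C * (R^(j+1) * Real.exp R)) * |s|^(j+1) := by
    intro s hs
    have e1 : ((-Complex.I) * s)^j / (j.factorial : ℂ) * M j =
        ∫ x : ℝ, (φ x : ℂ) * (Complex.exp (-(Complex.I * w * x)) *
          ∑ i ∈ Finset.range (j+1), (-(Complex.I * s * x))^i / (i.factorial : ℂ)) := by
      have : ∀ x : ℝ, (φ x : ℂ) * (Complex.exp (-(Complex.I * w * x)) *
          ∑ i ∈ Finset.range (j+1), (-(Complex.I * s * x))^i / (i.factorial : ℂ)) =
          ∑ i ∈ Finset.range (j+1), ((-Complex.I) * s)^i / (i.factorial : ℂ) *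
            (((x^i * φ x : ℝ) : ℂ) * Complex.exp (-(Complex.I * w * x))) := by
        intro x
        rw [Finset.mul_sum, Finset.mul_sum]
        refine Finset.sum_congr rfl fun i _ => ?_
        rw [show -(Complex.I * s * x) = (-Complex.I * s) * x by ring, mul_pow]
        push_cast
        ring
      simp_rw [this]
      rw [integral_finsetSum]
      · simp_rw [integral_const_mul]
        rw [Finset.sum_range_succ, Finset.sum_eq_zero, zero_add]
        intro i hi
        have := Finset.mem_range.1 hi
        rw [ih i this (by omega), mul_zero]
      · intro i _
        refine Integrable.const_mul ?_ _
        have := hint (fun x => x^i * Complex.exp (-(Complex.I * w * x))) (by fun_prop)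
        refine this.congr (Eventually.of_forall fun x => ?_)
        simp only; push_cast; ring
    have e2 : ‖(∫ x : ℝ, (φ x : ℂ) * Complex.exp (-(Complex.I * ((w + s : ℝ) : ℂ) * x))) -
        ∫ x : ℝ, (φ x : ℂ) * (Complex.exp (-(Complex.I * w * x)) *
          ∑ i ∈ Finset.range (j+1), (-(Complex.I * s * x))^i / (i.factorial : ℂ))‖ ≤
        C * (R^(j+1) * Real.exp R) * |s|^(j+1) := by
      rw [← integral_sub (hint _ (by fun_prop)) (hint _ (by fun_prop))]
      rw [hC, mul_assoc, ← integral_mul_const]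
      refine norm_integral_le_of_norm_le ?_ (Eventually.of_forall fun x => ?_)
      · refine Integrable.mul_const ?_ _
        exact (hφc.integrable_of_hasCompactSupport hφs).abs
      · rw [← mul_sub, norm_mul, Complex.norm_real, Real.norm_eq_abs]
        by_cases hx : R < |x|
        · simp [hR x hx]
        · push Not at hx
          refine mul_le_mul_of_nonneg_left ?_ (abs_nonneg _)
          have : -(Complex.I * ((w + s : ℝ) : ℂ) * x) = -(Complex.I * w * x) + -(Complex.I * s * x) := by
            push_cast; ring
          rw [this, Complex.exp_add, ← mul_sub, norm_mul]
          have : -(Complex.I * w * x) = ((-(w * x) : ℝ) : ℂ) * Complex.I := by push_cast; ring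
          rw [this, Complex.norm_exp_ofReal_mul_I, one_mul]
          refine (Complex.norm_exp_sub_sum_le_norm_mul_exp _ _).trans ?_
          have hn : ‖-(Complex.I * (s:ℂ) * (x:ℂ))‖ = |s| * |x| := by simp
          rw [hn, mul_pow]
          have h1 : |x|^(j+1) ≤ R^(j+1) := by gcongr
          have h2 : Real.exp (|s| * |x|) ≤ Real.exp R := by
            apply Real.exp_le_exp.2
            have := abs_nonneg x
            nlinarith
          calc |s|^(j+1) * |x|^(j+1) * Real.exp (|s| * |x|) ≤ |s|^(j+1) * R^(j+1) * Real.exp R := by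
                gcongr
            _ = _ := by ring
    rw [e1]
    have h3 := hb s
    have h4 : K * |s|^r ≤ K * |s|^(j+1) :=
      mul_le_mul_of_nonneg_left (pow_le_pow_of_le_one (abs_nonneg _) hs (by omega)) hK
    rw [norm_sub_rev] at e2
    have h5 := norm_le_norm_add_norm_sub' (∫ x : ℝ, (φ x : ℂ) * (Complex.exp (-(Complex.I * w * x)) *
          ∑ i ∈ Finset.range (j+1), (-(Complex.I * s * x))^i / (i.factorial : ℂ)))
          (∫ x : ℝ, (φ x : ℂ) * Complex.exp (-(Complex.I * ((w + s : ℝ) : ℂ) * x)))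
    linarith
  set D := K + C * (R^(j+1) * Real.exp R)
  have key2 : ∀ s : ℝ, 0 < s → s ≤ 1 → ‖M j‖ ≤ D * j.factorial * s := by
    intro s hs hs1
    have := key s (by rw [abs_of_pos hs]; exact hs1)
    rw [norm_mul, norm_div, norm_pow, norm_mul, norm_neg, Complex.norm_I, one_mul,
      Complex.norm_real, Real.norm_eq_abs, abs_of_pos hs, Complex.norm_natCast] at this
    have hf : (0:ℝ) < j.factorial := by exact_mod_cast j.factorial_pos
    have hsj : 0 < s^j := by positivity
    rw [div_mul_eq_mul_div, div_le_iff₀ hf, pow_succ] at this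
    refine le_of_mul_le_mul_left ?_ hsj
    linarith
  have : ‖M j‖ ≤ 0 := by
    have ht : Tendsto (fun s : ℝ => D * j.factorial * s) (nhdsWithin 0 (Set.Ioi 0)) (nhds 0) := by
      have : Tendsto (fun s : ℝ => D * j.factorial * s) (nhds 0) (nhds (D * j.factorial * 0)) :=
        (continuous_const.mul continuous_id).tendsto 0
      rw [mul_zero] at this
      exact this.mono_left nhdsWithin_le_nhds
    refine ge_of_tendsto ht ?_
    filter_upwards [Ioc_mem_nhdsGT (zero_lt_one' ℝ)] with s hs
    exact key2 s hs.1 hs.2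
  exact norm_le_zero_iff.1 this

lemma aux_poisson (φ : ℝ → ℝ) (hφc : Continuous φ) (hφs : HasCompactSupport φ) (h : ℝ) (hh : 0 < h)
    (hz : ∀ l : ℤ, l ≠ 0 →
      ∫ x : ℝ, (φ x : ℂ) * Complex.exp (-(Complex.I * ((2 * Real.pi * l * h⁻¹ : ℝ) : ℂ) * x)) = 0) (x : ℝ) :
    ((∑' α : ℤ, φ (x - h * α) : ℝ) : ℂ) = (h⁻¹ : ℝ) * ∫ x : ℝ, (φ x : ℂ) := by
  obtain ⟨R, hR0, hR⟩ := aux_bounded_supp φ hφs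
  let f : C(ℝ, ℂ) := ⟨fun t => (φ (h * t) : ℂ), by fun_prop⟩
  have hF : ∀ l : ℤ, FourierTransform.fourier (f : ℝ → ℂ) (l:ℝ) = (h⁻¹ : ℝ) *
      ∫ x : ℝ, (φ x : ℂ) * Complex.exp (-(Complex.I * ((2 * Real.pi * l * h⁻¹ : ℝ) : ℂ) * x)) := by
    intro l
    rw [Real.fourier_real_eq_integral_exp_smul]
    have := Measure.integral_comp_mul_left (fun x : ℝ => (φ x : ℂ) * Complex.exp (-(Complex.I * ((2 * Real.pi * l * h⁻¹ : ℝ) : ℂ) * x))) h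
    rw [abs_of_pos (inv_pos.2 hh), Complex.real_smul] at this
    rw [← this]
    congr 1
    funext v
    rw [smul_eq_mul, mul_comm]
    congr 2
    have : (h:ℂ) ≠ 0 := by exact_mod_cast hh.ne'
    push_cast
    field_simp
  have hF0 : ∀ l : ℤ, l ≠ 0 → FourierTransform.fourier (f : ℝ → ℂ) (l:ℝ) = 0 := by
    intro l hl
    rw [hF, hz l hl, mul_zero]
  have hP := Real.tsum_eq_tsum_fourier (f := f) ?_ ?_ (x / h)
  · have hs : ∑' l : ℤ, FourierTransform.fourier (f : ℝ → ℂ) (l:ℝ) * fourier l ((x / h : ℝ) : UnitAddCircle) = _ :=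
      tsum_eq_single (0:ℤ) (fun l hl => by rw [hF0 l hl, zero_mul])
    rw [hs] at hP
    rw [hF] at hP
    simp only [fourier_zero, mul_one] at hP
    have e : ∫ x : ℝ, (φ x : ℂ) * Complex.exp (-(Complex.I * ((2 * Real.pi * (0:ℤ) * h⁻¹ : ℝ) : ℂ) * x)) = ∫ x : ℝ, (φ x : ℂ) := by
      simp
    rw [e] at hP
    rw [← hP, Complex.ofReal_tsum, ← (Equiv.neg ℤ).tsum_eq]
    refine tsum_congr fun α => ?_
    simp only [f, ContinuousMap.coe_mk]
    congr 2
    simp only [Equiv.neg_apply]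
    push_cast
    field_simp
    ring
  · intro K
    obtain ⟨B, hB⟩ := K.isCompact.isBounded.subset_closedBall 0
    refine summable_of_finite_support ((aux_finite_int (R / h + B)).subset fun α hα => ?_)
    by_contra hc
    simp only [Set.mem_setOf_eq, not_le] at hc
    apply hα
    rw [norm_eq_zero]
    ext ⟨y, hy⟩
    have hyB := hB hy
    simp only [Metric.mem_closedBall, dist_zero_right, Real.norm_eq_abs] at hyB
    simp only [f, ContinuousMap.restrict_apply, ContinuousMap.comp_apply, ContinuousMap.coe_mk,
      ContinuousMap.coe_addRight, ContinuousMap.zero_apply]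
    rw [hR, Complex.ofReal_zero]
    rw [abs_mul, abs_of_pos hh]
    have h1 : |(α:ℝ)| ≤ |y + α| + |y| := by
      have := abs_sub (y + α) y
      simpa using this
    have h2 : R / h < |y + α| := by linarith
    rw [div_lt_iff₀ hh] at h2
    linarith
  · refine summable_of_finite_support ((Set.finite_singleton (0:ℤ)).subset fun α hα => ?_)
    by_contra hc
    exact hα (hF0 α hc)

lemma aux_supp (φ : ℝ → ℝ) (hφs : HasCompactSupport φ) (h : ℝ) (hh : 0 < h) (γ : ℤ → ℝ) (x : ℝ) :
    Summable (fun α : ℤ => γ α * φ (x - h * α)) := by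
  obtain ⟨R, hR0, hR⟩ := aux_bounded_supp φ hφs
  refine summable_of_finite_support ((aux_finite_int ((R + |x|) / h)).subset fun α hα => ?_)
  by_contra hc
  simp only [Set.mem_setOf_eq, not_le] at hc
  apply hα
  simp only
  rw [hR, mul_zero]
  rw [div_lt_iff₀ hh] at hc
  have h1 : |h * α| ≤ |x - h * α| + |x| := by
    have := abs_sub (x - h * α) x
    simpa using this
  rw [abs_mul, abs_of_pos hh] at h1
  linarith

/-- The span of shifts. -/
def auxSpan (φ : ℝ → ℝ) (hφs : HasCompactSupport φ) (h : ℝ) (hh : 0 < h) : Submodule ℝ (ℝ → ℝ) where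
  carrier := {f | ∃ γ : ℤ → ℝ, ∀ x, f x = ∑' α : ℤ, γ α * φ (x - h * α)}
  add_mem' := by
    rintro f g ⟨γ, hγ⟩ ⟨δ, hδ⟩
    refine ⟨γ + δ, fun x => ?_⟩
    simp only [Pi.add_apply, add_mul]
    rw [(aux_supp φ hφs h hh γ x).tsum_add (aux_supp φ hφs h hh δ x), hγ, hδ]
  zero_mem' := ⟨0, fun x => by simp⟩
  smul_mem' := by
    rintro c f ⟨γ, hγ⟩
    refine ⟨c • γ, fun x => ?_⟩
    simp only [Pi.smul_apply, smul_eq_mul, mul_assoc]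
    rw [tsum_mul_left, hγ]

lemma aux_pow_mem (φ : ℝ → ℝ) (hφs : HasCompactSupport φ) (h : ℝ) (hh : 0 < h) (r : ℕ) (c : ℕ → ℝ)
    (hc0 : c 0 ≠ 0)
    (hc : ∀ j < r, ∀ x : ℝ, ∑' α : ℤ, (x - h * α)^j * φ (x - h * α) = c j) :
    ∀ k < r, (fun x : ℝ => x^k) ∈ auxSpan φ hφs h hh := by
  intro k
  induction k using Nat.strong_induction_on with
  | _ k ih =>
  intro hk
  have hT : (fun x : ℝ => ∑' α : ℤ, (h * α)^k * φ (x - h * α)) ∈ auxSpan φ hφs h hh :=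
    ⟨_, fun x => rfl⟩
  have hS : ∀ j : ℕ, ∀ x : ℝ, Summable fun α : ℤ => (x - h * α)^j * φ (x - h * α) := by
    intro j x
    exact aux_supp φ hφs h hh (fun α => (x - h * α)^j) x
  have hE : (fun x : ℝ => ∑' α : ℤ, (h * α)^k * φ (x - h * α)) =
      c 0 • (fun x : ℝ => x^k) +
        ∑ j ∈ Finset.range k, ((-1)^(j+1) * (k.choose (j+1) : ℝ) * c (j+1)) • (fun x : ℝ => x^(k-(j+1))) := by
    funext x
    have : ∀ α : ℤ, (h * α)^k * φ (x - h * α) = ∑ j ∈ Finset.range (k+1),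
        ((-1)^j * (k.choose j : ℝ) * x^(k-j)) * ((x - h * α)^j * φ (x - h * α)) := by
      intro α
      have : (h * α)^k = (-(x - h * α) + x)^k := by congr 1; ring
      rw [this, add_pow, Finset.sum_mul]
      refine Finset.sum_congr rfl fun j _ => ?_
      rw [neg_pow]; ring
    simp_rw [this]
    rw [Summable.tsum_finsetSum (fun j _ => (hS j x).mul_left _)]
    simp_rw [tsum_mul_left]
    rw [Finset.sum_range_succ', add_comm]
    simp only [Pi.add_apply, Pi.smul_apply, Finset.sum_apply, smul_eq_mul]
    congr 1
    · rw [hc 0 (by omega)]; simp; ring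
    · refine Finset.sum_congr rfl fun j hj => ?_
      have := Finset.mem_range.1 hj
      rw [hc (j+1) (by omega)]; ring
  rw [hE] at hT
  have h2 := (Submodule.add_mem_iff_left _ (Submodule.sum_mem _ fun j hj => by
    have := Finset.mem_range.1 hj
    exact Submodule.smul_mem _ _ (ih (k-(j+1)) (by omega) (by omega)))).1 hT
  exact (Submodule.smul_mem_iff _ hc0).1 h2

/-- Polynomial reproduction (Theorem 4.3): if `φ` is the continuous compactly supported
refinable ripplet with Fourier transform `Φ^{(n,m)}` (`m ≥ 1`), then every polynomial of
degree at most `n − 2` lies in the span of the `2^{-m}`-shifts of `φ`. -/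
theorem polynomial_reproduction (n : ℕ) (hn : 2 ≤ n) (μ : ℝ) (hμ : 1 < μ)
    (m : ℕ) (hm : 1 ≤ m)
    (Φ : ℝ → ℂ)
    (hΦ : ∀ ω : ℝ, Tendsto (fun N => partialProdNS n m μ ω N) atTop (nhds (Φ ω)))
    (φ : ℝ → ℝ) (hφc : Continuous φ) (hφs : HasCompactSupport φ)
    (hφF : ∀ ω : ℝ, ∫ x : ℝ, (φ x : ℂ) * Complex.exp (-(Complex.I * ω * x)) = Φ ω) :
    ∀ p : Polynomial ℝ, p.degree ≤ (n - 2 : ℕ) →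
      ∃ γ : ℤ → ℝ, ∀ x : ℝ,
        p.eval x = ∑' α : ℤ, γ α * φ (x - (2 : ℝ) ^ (-(m : ℤ)) * α) := by
  obtain ⟨r, rfl⟩ : ∃ r, n = r + 1 := ⟨n - 1, by omega⟩
  have hh : (0:ℝ) < (2:ℝ)^(-(m:ℤ)) := by positivity
  have hinv : ((2:ℝ)^(-(m:ℤ)))⁻¹ = 2^m := by simp
  set h : ℝ := (2:ℝ)^(-(m:ℤ)) with hhdef
  have hmom : ∀ l : ℤ, l ≠ 0 → ∀ j < r, ∫ x : ℝ, ((x^j * φ x : ℝ) : ℂ) *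
      Complex.exp (-(Complex.I * ((2 * Real.pi * l * h⁻¹ : ℝ) : ℂ) * x)) = 0 := by
    intro l hl
    obtain ⟨K, hK, hKb⟩ := aux_Phi_bound r m hm μ Φ hΦ l hl
    refine aux_moments φ hφc hφs r _ K hK fun s => ?_
    rw [hφF, hinv]
    exact hKb s
  have hP : ∀ j < r, ∀ x : ℝ, ((∑' α : ℤ, (x - h * α)^j * φ (x - h * α) : ℝ) : ℂ) =
      (h⁻¹ : ℝ) * ∫ x : ℝ, ((x^j * φ x : ℝ) : ℂ) := by
    intro j hj x
    exact aux_poisson (fun x => x^j * φ x) (by fun_prop) (hφs.mul_left) h hh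
      (fun l hl => hmom l hl j hj) x
  let c : ℕ → ℝ := fun j => ∑' α : ℤ, (0 - h * α)^j * φ (0 - h * α)
  have hc : ∀ j < r, ∀ x : ℝ, ∑' α : ℤ, (x - h * α)^j * φ (x - h * α) = c j := by
    intro j hj x
    have := (hP j hj x).trans (hP j hj 0).symm
    exact_mod_cast this
  have hc0 : c 0 ≠ 0 := by
    intro h0
    have h1 := hP 0 (by omega) 0
    have h2 := hφF 0
    rw [aux_Phi_zero r m hm μ Φ hΦ] at h2
    simp only [Complex.ofReal_zero, mul_zero, zero_mul, neg_zero, Complex.exp_zero, mul_one] at h2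
    simp only [pow_zero, one_mul] at h1
    rw [h2] at h1
    have h3 : c 0 = h⁻¹ := by
      simp only [c, pow_zero, one_mul]
      rw [mul_one] at h1
      exact_mod_cast h1
    exact (inv_pos.2 hh).ne' (h3 ▸ h0)
  have hmem := aux_pow_mem φ hφs h hh r c hc0 hc
  intro p hp
  have : (fun x => p.eval x) ∈ auxSpan φ hφs h hh := by
    have e : (fun x => p.eval x) = ∑ i ∈ Finset.range r, p.coeff i • (fun x : ℝ => x^i) := by
      funext x
      have hd : p.natDegree < r := by
        have := Polynomial.natDegree_le_of_degree_le hp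
        omega
      rw [Polynomial.eval_eq_sum_range' hd]
      simp
    rw [e]
    exact Submodule.sum_mem _ fun i hi => Submodule.smul_mem _ _ (hmem i (Finset.mem_range.1 hi))
  exact this
end

section
/- (Differentiation rule, Theorem 4.5, Fourier form.) Let n ≥ 3 be an integer, μ > 1 real, and r an integer with 1 ≤ r ≤ n − 2. Then for every integer m ≥ 1 and every ω ∈ ℝ, (iω)^r · Φ^{(n,m)}(ω) = ( 2^m (1 − e^{-iω 2^{-m}}) )^r · Φ^{(n-r,m)}(ω); and for m = 0, (iω)^r · Φ^{(n,0)}(ω) = ( 2 (1 − e^{-iω/2}) )^r · Φ^{(n-r,0)}(ω). Equivalently, in the time domain D^r φ^{(n,m)} = ∇^r_{h} φ^{(n-r,m)} with backward difference step h = 2^{-m} for m ≥ 1 and h = 2^{-1} for m = 0. -/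
open MeasureTheory Filter Complex

lemma symbolNS_pos (p m : ℕ) (hm : m ≠ 0) (μ : ℝ) (z : ℂ) :
    symbolNS (p+1) m μ z = (((2 : ℝ) ^ (-(((p+1 : ℕ) : ℝ) + 1 + (m : ℝ) ^ (-μ))) : ℝ) : ℂ) *
      ((1+z)^2 + 4 * (((2 : ℝ) ^ ((m : ℝ) ^ (-μ)) - 1 : ℝ) : ℂ) * z) * (1+z)^p := by
  have h1 : ∑ α ∈ Finset.range (p+3), ((binomZ (p+2) (α:ℤ) : ℝ) : ℂ) * z^α = (1+z)^(p+2) := by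
    rw [add_comm 1 z, add_pow]
    refine Finset.sum_congr rfl fun i _ => ?_
    simp [binomZ, mul_comm]
  have h2 : ∑ α ∈ Finset.range (p+3), ((binomZ p ((α:ℤ)-1) : ℝ) : ℂ) * z^α = z * (1+z)^p := by
    rw [Finset.sum_range_succ', Finset.sum_range_succ, add_comm 1 z, add_pow, Finset.mul_sum]
    have e : ∀ i : ℕ, binomZ p (((i+1 : ℕ) : ℤ) - 1) = (p.choose i : ℝ) := by
      intro i; simp [binomZ]
    have e0 : binomZ p (((0 : ℕ) : ℤ) - 1) = 0 := by simp [binomZ]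
    simp only [e, e0]
    simp only [Nat.choose_succ_self, Nat.cast_zero, ofReal_zero, zero_mul, add_zero]
    refine Finset.sum_congr rfl fun i _ => ?_
    push_cast
    ring
  have h3 : (1+z)^2 * (1+z)^p = (1+z)^(p+2) := by ring
  rw [mul_assoc, add_mul, h3, ← h1, mul_assoc _ z, ← h2, Finset.mul_sum, ← Finset.sum_add_distrib,
    Finset.mul_sum]
  unfold symbolNS
  refine Finset.sum_congr rfl fun i hi => ?_
  have hi' : (0:ℤ) ≤ i ∧ (i:ℤ) ≤ ((p+1 : ℕ) : ℤ) + 1 := by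
    have := Finset.mem_range.1 hi
    omega
  unfold maskNS
  rw [if_neg hm, if_pos hi']
  simp only [Nat.add_sub_cancel]
  push_cast
  ring

lemma symbolNS_zero (n : ℕ) (μ : ℝ) (z : ℂ) : symbolNS n 0 μ z = (1+z)/2 := by
  unfold symbolNS
  rw [Finset.sum_range_succ', Finset.sum_range_succ', Finset.sum_eq_zero]
  · simp [maskNS]; ring
  · intro i _
    have : ¬ (((i+1+1 : ℕ) : ℤ) = 0 ∨ ((i+1+1 : ℕ) : ℤ) = 1) := by omega
    simp only [maskNS, if_true, if_neg this]
    simp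

lemma symbolNS_reduce (p r m : ℕ) (hm : m ≠ 0) (μ : ℝ) (z : ℂ) :
    symbolNS (p+r+1) m μ z = ((1+z)/2)^r * symbolNS (p+1) m μ z := by
  rw [symbolNS_pos _ _ hm, symbolNS_pos _ _ hm]
  have : (2:ℝ) ^ (-(((p+r+1 : ℕ) : ℝ) + 1 + (m : ℝ) ^ (-μ))) =
      (2:ℝ) ^ (-(((p+1 : ℕ) : ℝ) + 1 + (m : ℝ) ^ (-μ))) * (1/2)^r := by
    rw [show -(((p+r+1 : ℕ) : ℝ) + 1 + (m : ℝ) ^ (-μ)) =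
      -(((p+1 : ℕ) : ℝ) + 1 + (m : ℝ) ^ (-μ)) - (r:ℝ) by push_cast; ring,
      Real.rpow_sub two_pos, Real.rpow_natCast]
    simp [div_eq_mul_inv]
  rw [this, div_pow (1+z), pow_add]
  push_cast
  rw [div_pow, one_pow]
  ring

lemma telescope (m N : ℕ) (h : m ≤ N) (ω : ℝ) :
    (2:ℂ)^N * (1 - Complex.exp (-(Complex.I * ω) / 2 ^ N)) *
      ∏ k ∈ Finset.Ico m N, (1 + Complex.exp (-(Complex.I * ω) / 2 ^ (k + 1)))/2 =
    (2:ℂ)^m * (1 - Complex.exp (-(Complex.I * ω) / 2 ^ m)) := by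
  induction N, h using Nat.le_induction with
  | base => simp
  | succ N h ih =>
    rw [Finset.prod_Ico_succ_top h, ← ih]
    have : Complex.exp (-(Complex.I * ω) / 2 ^ N) = Complex.exp (-(Complex.I * ω) / 2 ^ (N+1))^2 := by
      rw [← Complex.exp_nat_mul]; congr 1; push_cast; field_simp; ring
    rw [this]
    ring

lemma tendsto_diff (ω : ℝ) :
    Tendsto (fun N : ℕ => (2:ℂ)^N * (1 - Complex.exp (-(Complex.I * ω) / 2 ^ N))) atTop
      (nhds (Complex.I * ω)) := by
  have hd : HasDerivAt (fun t : ℝ => Complex.exp (-(Complex.I * ω) * (t:ℂ))) (-(Complex.I * ω)) 0 := by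
    have h0 : HasDerivAt (fun t : ℝ => -(Complex.I * ω) * (t:ℂ)) (-(Complex.I * ω)) 0 := by
      simpa using (Complex.ofRealCLM.hasDerivAt (x := (0:ℝ))).const_mul (-(Complex.I * ω))
    simpa using h0.cexp
  rw [hasDerivAt_iff_tendsto_slope_zero] at hd
  have ht : Tendsto (fun N : ℕ => ((1/2:ℝ))^N) atTop (nhdsWithin 0 {0}ᶜ) := by
    rw [tendsto_nhdsWithin_iff]
    exact ⟨tendsto_pow_atTop_nhds_zero_of_lt_one (by norm_num) (by norm_num),
      Eventually.of_forall fun N => by simp⟩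
  have := (hd.comp ht).neg
  rw [neg_neg] at this
  refine this.congr fun N => ?_
  simp [div_eq_mul_inv]
  ring

lemma rule_pos (p r : ℕ) (μ ω : ℝ) (m : ℕ) (hm : 1 ≤ m) (a b : ℂ)
    (ha : Tendsto (fun N => partialProdNS (p+r+1) m μ ω N) atTop (nhds a))
    (hb : Tendsto (fun N => partialProdNS (p+1) m μ ω N) atTop (nhds b)) :
    (Complex.I * ω) ^ r * a =
      ((2 : ℂ) ^ m * (1 - Complex.exp (-(Complex.I * ω) / 2 ^ m))) ^ r * b := by
  refine tendsto_nhds_unique (((tendsto_diff ω).pow r).mul ha) ?_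
  refine (hb.const_mul (((2 : ℂ) ^ m * (1 - Complex.exp (-(Complex.I * ω) / 2 ^ m))) ^ r)).congr' ?_
  filter_upwards [eventually_ge_atTop m] with N hN
  have : partialProdNS (p+r+1) m μ ω N =
      (∏ k ∈ Finset.Ico m N, (1 + Complex.exp (-(Complex.I * ω) / 2 ^ (k + 1)))/2)^r *
        partialProdNS (p+1) m μ ω N := by
    unfold partialProdNS
    rw [← Finset.prod_pow, ← Finset.prod_mul_distrib]
    refine Finset.prod_congr rfl fun k hk => symbolNS_reduce _ _ _ ?_ _ _
    have := (Finset.mem_Ico.1 hk).1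
    omega
  rw [this, ← telescope m N hN ω, mul_pow _ (∏ k ∈ Finset.Ico m N, _) r, mul_assoc]

lemma limit_zero (n : ℕ) (μ ω : ℝ) (a b : ℂ)
    (ha : Tendsto (fun N => partialProdNS n 0 μ ω N) atTop (nhds a))
    (hb : Tendsto (fun N => partialProdNS n 1 μ ω N) atTop (nhds b)) :
    a = (1 + Complex.exp (-(Complex.I * ω) / 2 ^ (0 + 1)))/2 * b := by
  refine tendsto_nhds_unique ha ((hb.const_mul _).congr' ?_)
  filter_upwards [eventually_ge_atTop 1] with N hN
  unfold partialProdNS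
  rw [Finset.prod_eq_prod_Ico_succ_bot (by omega : 0 < N), symbolNS_zero]

/-- Differentiation rule (Theorem 4.5, Fourier form): for `1 ≤ r ≤ n − 2`,
`(iω)^r Φ^{(n,m)}(ω) = (2^m (1 − e^{-iω2^{-m}}))^r Φ^{(n-r,m)}(ω)` for `m ≥ 1`, and
`(iω)^r Φ^{(n,0)}(ω) = (2 (1 − e^{-iω/2}))^r Φ^{(n-r,0)}(ω)`. -/
theorem differentiation_rule (n : ℕ) (hn : 3 ≤ n) (μ : ℝ) (hμ : 1 < μ)
    (r : ℕ) (hr1 : 1 ≤ r) (hr2 : r ≤ n - 2)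
    (Φ Φr : ℕ → ℝ → ℂ)
    (hΦ : ∀ m : ℕ, ∀ ω : ℝ,
      Tendsto (fun N => partialProdNS n m μ ω N) atTop (nhds (Φ m ω)))
    (hΦr : ∀ m : ℕ, ∀ ω : ℝ,
      Tendsto (fun N => partialProdNS (n - r) m μ ω N) atTop (nhds (Φr m ω))) :
    (∀ m : ℕ, 1 ≤ m → ∀ ω : ℝ,
      (Complex.I * ω) ^ r * Φ m ω =
        ((2 : ℂ) ^ m * (1 - Complex.exp (-(Complex.I * ω) * 2 ^ (-(m : ℤ))))) ^ r * Φr m ω) ∧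
    (∀ ω : ℝ,
      (Complex.I * ω) ^ r * Φ 0 ω =
        (2 * (1 - Complex.exp (-(Complex.I * ω) / 2))) ^ r * Φr 0 ω) := by
  obtain ⟨p, rfl⟩ : ∃ p, n = p + r + 1 := ⟨n - r - 1, by omega⟩
  have e : p + r + 1 - r = p + 1 := by omega
  rw [e] at hΦr
  refine ⟨fun m hm ω => ?_, fun ω => ?_⟩
  · rw [rule_pos p r μ ω m hm _ _ (hΦ m ω) (hΦr m ω), zpow_neg, zpow_natCast, ← div_eq_mul_inv]
  · have h1 := rule_pos p r μ ω 1 le_rfl _ _ (hΦ 1 ω) (hΦr 1 ω)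
    simp only [pow_one] at h1
    rw [limit_zero _ μ ω _ _ (hΦ 0 ω) (hΦ 1 ω), limit_zero _ μ ω _ _ (hΦr 0 ω) (hΦr 1 ω),
      mul_left_comm, h1, mul_left_comm]
end

section
/- (Vanishing moments, part of Theorem 5.1.) Let n ≥ 2 and m ≥ 1 be integers. Let φ : ℝ → ℝ be continuous and compactly supported, and suppose that every polynomial p of degree at most n − 2 can be written pointwise as p(x) = Σ_{α∈ℤ} γ_α φ(x − 2^{-m}α) for some real coefficients (γ_α) (locally finite sum). Let ψ : ℝ → ℝ be integrable and compactly supported with ∫_ℝ ψ(x) φ(x − 2^{-m}β) dx = 0 for every β ∈ ℤ. Then ψ has n − 1 vanishing moments: ∫_ℝ x^d ψ(x) dx = 0 for every integer d with 0 ≤ d ≤ n − 2. -/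
open MeasureTheory

/-- Vanishing moments (part of Theorem 5.1): if the `2^{-m}`-shifts of the continuous
compactly supported function `φ` reproduce all polynomials of degree at most `n − 2`, and
the integrable compactly supported function `ψ` is orthogonal to all `2^{-m}`-shifts of
`φ`, then `ψ` has `n − 1` vanishing moments. -/
theorem vanishing_moments (n m : ℕ) (hn : 2 ≤ n) (hm : 1 ≤ m)
    (φ : ℝ → ℝ) (hφc : Continuous φ) (hφs : HasCompactSupport φ)
    (hrep : ∀ p : Polynomial ℝ, p.degree ≤ (n - 2 : ℕ) →
      ∃ γ : ℤ → ℝ, ∀ x : ℝ,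
        p.eval x = ∑' α : ℤ, γ α * φ (x - (2 : ℝ) ^ (-(m : ℤ)) * α))
    (ψ : ℝ → ℝ) (hψi : Integrable ψ) (hψs : HasCompactSupport ψ)
    (horth : ∀ β : ℤ, ∫ x : ℝ, ψ x * φ (x - (2 : ℝ) ^ (-(m : ℤ)) * β) = 0) :
    ∀ d : ℕ, d ≤ n - 2 → ∫ x : ℝ, x ^ d * ψ x = 0 := by
  intro d hd
  obtain ⟨γ, hγ⟩ := hrep (Polynomial.X ^ d) (by
    rw [Polynomial.degree_X_pow]; exact_mod_cast hd)
  simp only [Polynomial.eval_pow, Polynomial.eval_X] at hγ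
  have hh : (0 : ℝ) < (2 : ℝ) ^ (-(m : ℤ)) := by positivity
  generalize (2 : ℝ) ^ (-(m : ℤ)) = h at *
  have hbd : ∀ f : ℝ → ℝ, HasCompactSupport f → ∃ R : ℝ, ∀ x, f x ≠ 0 → |x| ≤ R := by
    intro f hf
    obtain ⟨R, hR⟩ := hf.isCompact.isBounded.subset_closedBall (0 : ℝ)
    refine ⟨R, fun x hx => ?_⟩
    have := hR (subset_tsupport f hx)
    simpa using this
  obtain ⟨R₁, hR₁⟩ := hbd φ hφs
  obtain ⟨R₂, hR₂⟩ := hbd ψ hψs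
  obtain ⟨C, hC⟩ := hφc.bounded_above_of_compact_support hφs
  have key : ∀ x : ℝ, x ^ d * ψ x =
      ∑ α ∈ Finset.Icc (-⌈(R₁ + R₂) / h⌉) ⌈(R₁ + R₂) / h⌉, γ α * (ψ x * φ (x - h * α)) := by
    intro x
    by_cases hx : ψ x = 0
    · simp [hx]
    rw [hγ x, tsum_eq_sum (s := Finset.Icc (-⌈(R₁ + R₂) / h⌉) ⌈(R₁ + R₂) / h⌉), Finset.sum_mul]
    · exact Finset.sum_congr rfl fun α _ => by ring
    · intro α hα
      by_contra hne
      apply hα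
      have h1 := abs_le.1 (hR₁ _ (right_ne_zero_of_mul hne))
      have h2 := abs_le.1 (hR₂ x hx)
      have h3 := Int.le_ceil ((R₁ + R₂) / h)
      rw [div_le_iff₀ hh] at h3
      rw [Finset.mem_Icc]
      constructor
      · have : -((⌈(R₁ + R₂) / h⌉ : ℤ) : ℝ) ≤ α := by
          by_contra hc
          nlinarith
        exact_mod_cast this
      · have : (α : ℝ) ≤ ((⌈(R₁ + R₂) / h⌉ : ℤ) : ℝ) := by
          by_contra hc
          nlinarith
        exact_mod_cast this
  have hint : ∀ α : ℤ, Integrable (fun x => ψ x * φ (x - h * α)) := by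
    intro α
    refine hψi.mul_bdd (c := C) ?_ (Filter.Eventually.of_forall fun x => hC _)
    exact (hφc.comp (continuous_id.sub continuous_const)).aestronglyMeasurable
  simp_rw [key]
  rw [integral_finsetSum _ fun α _ => (hint α).const_mul _]
  refine Finset.sum_eq_zero fun α _ => ?_
  rw [integral_const_mul, horth, mul_zero]
end
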